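/- The deformed CMS integrals pairwise commute: for all integers p, q ≥ 1, [L_p, L_q] = 0 as ℂ-linear operators on F = ℂ(x_1,…,x_{n+m}). -/

import Mathlib

/-!
The proof has three ingredients: a quantum Lax pair, an expansion of rational functions as Hahn
series, and the injectivity of the constant term on the centralizer of `L_2`.

*Lax pair.* Let `M` be the matrix of operators with `∂^{(p)} = M^p e`, `e = (1,…,1)`. Then
`[L_2, M] = [A, M]` for an explicit matrix `A` of functions whose rows sum to zero (`CMS.lax`);
since `a_ij / c_i` is symmetric, where `c_i = k^{p(i)}`, its weighted columns sum to zero as well.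
Hence `[L_2, L_p] = 0` for all `p` (`CMS.ham_Lop`). This needs only the commutation relations
between functions and Euler derivations, so it holds in every representation of them.

*Expansion.* Rational functions embed into Hahn series with lexicographically ordered exponents in
`ℤ^N`, which is the expansion in the region `|x_1| ≪ |x_2| ≪ …`. The operators act on formal
expressions `x^λ f(x, λ)`, where `f` is a Hahn series with coefficients in `ℂ[λ]`. Each
`x_i/(x_i - x_j)` tends to `0` or `1` there, so every `L_p` is triangular for the filtration by
exponents, and acts on the leading coefficient of exponent `γ` by `h(λ + γ)` for a polynomial `h`,
its constant term (`HasSymbol`). Constant terms are multiplicative and commute, so the constant term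
of `A = [L_p, L_q]` is zero.

*Injectivity.* Suppose `A` commutes with `L_2`, has constant term zero, and let `x^{λ+ν} a(λ)` be the
leading term of `A x^λ`, assumed nonzero. Comparing the coefficients of `x^{λ+ν}` in
`L_2 A x^λ = A L_2 x^λ` gives `h_2(λ + ν) = h_2(λ)` for the constant term
`h_2 = Σ (c_i λ_i² - b_i λ_i)` of `L_2`, which forces `ν = 0`; but the coefficient of `x^λ` in
`A x^λ` is the constant term of `A`, which is zero. So `A` kills all monomials, and being a
differential operator it kills all rational functions (`CMS.vanish`). The comparison uses that `A`
sends functions of small order to functions of small order. Infinite linearity of `A` is not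
available for this; `order_bound` derives it from the behaviour on monomials, by induction on the
order of `A` and clearing denominators.

Specializing `λ = 0` (`bridge`) returns from `x^λ f(x, λ)` to rational functions.
-/

set_option synthInstance.maxHeartbeats 400000
set_option maxHeartbeats 1000000

noncomputable section
open scoped BigOperators

/-- The field of rational functions `ℂ(x₁,…,x_N)`. -/
def Fld (N : ℕ) : Type := FractionRing (MvPolynomial (Fin N) ℂ)

instance (N : ℕ) : Field (Fld N) :=
  inferInstanceAs (Field (FractionRing (MvPolynomial (Fin N) ℂ)))
instance (N : ℕ) : Algebra ℂ (Fld N) :=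
  inferInstanceAs (Algebra ℂ (FractionRing (MvPolynomial (Fin N) ℂ)))
instance (N : ℕ) : Algebra (MvPolynomial (Fin N) ℂ) (Fld N) :=
  inferInstanceAs (Algebra (MvPolynomial (Fin N) ℂ) (FractionRing (MvPolynomial (Fin N) ℂ)))

/-- The coordinate `x_i` as an element of `ℂ(x₁,…,x_N)`; for `N = n + m` the last `m`
coordinates are the variables `y_j = x_{n+j}`. -/
def xv {N : ℕ} (i : Fin N) : Fld N :=
  algebraMap (MvPolynomial (Fin N) ℂ) (Fld N) (MvPolynomial.X i)

/-- The parity function: `p(i) = 0` on the first `n` indices, `p(i) = 1` on the rest. -/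
def par (n : ℕ) {N : ℕ} (i : Fin N) : ℕ := if (i : ℕ) < n then 0 else 1

/-- `ℂ`-linear operators on `ℂ(x₁,…,x_N)`. -/
abbrev EndF (N : ℕ) := Fld N →ₗ[ℂ] Fld N

/-- Multiplication by a rational function, as a `ℂ`-linear operator. -/
def mulOp {N : ℕ} (a : Fld N) : EndF N := LinearMap.mulLeft ℂ a

/-- The recursively defined operators `∂_i^{(p)}`:
`∂_i^{(1)} = k^{p(i)} ∂_i` and
`∂_i^{(p)} = ∂_i^{(1)} ∂_i^{(p-1)} − Σ_{j≠i} k^{1-p(j)} (x_i/(x_i-x_j)) (∂_i^{(p-1)} − ∂_j^{(p-1)})`. -/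
def Dpow (n : ℕ) (k : ℂ) {N : ℕ} (Deul : Fin N → EndF N) : ℕ → Fin N → EndF N
  | 0 => fun _ => 0
  | 1 => fun i => (k ^ par n i) • Deul i
  | (p+2) => fun i =>
      ((k ^ par n i) • Deul i) ∘ₗ Dpow n k Deul (p+1) i
        - ∑ j ∈ Finset.univ.erase i,
            (k ^ (1 - par n j)) •
              (mulOp (xv i / (xv i - xv j)) ∘ₗ (Dpow n k Deul (p+1) i - Dpow n k Deul (p+1) j))

/-- The deformed CMS integrals `L_p = Σ_i k^{-p(i)} ∂_i^{(p)}`. -/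
def Ltot (n : ℕ) (k : ℂ) {N : ℕ} (Deul : Fin N → EndF N) (p : ℕ) : EndF N :=
  ∑ i : Fin N, (k⁻¹ ^ par n i) • Dpow n k Deul p i

/-- `Deul` is the family of Euler derivations `∂_i = x_i ∂/∂x_i`: each `Deul i` is a `ℂ`-linear
operator on `ℂ(x₁,…,x_N)` satisfying the Leibniz rule and taking the prescribed values on the
coordinates (these properties determine it uniquely). -/
def IsEulerFamily {N : ℕ} (Deul : Fin N → EndF N) : Prop :=
  (∀ (i : Fin N) (f g : Fld N), Deul i (f * g) = f * Deul i g + Deul i f * g) ∧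
  (∀ i j : Fin N, Deul i (xv j) = if j = i then xv j else 0)

set_option linter.unusedSectionVars false

/-! ### The functions `x_i/(x_i - x_j)` -/

section Lax

variable {ι F D : Type*} [Fintype ι] [DecidableEq ι] [Field F] [Algebra ℂ F] [Ring D]

/-- `r_ij = x_i/(x_i - x_j)`; the junk value at `i = j` is `r_ii = 0`. -/
def rr (x : ι → F) (i j : ι) : F := x i / (x i - x j)

/-- `w_ij = x_i x_j/(x_i - x_j)²`; the junk value at `i = j` is `w_ii = 0`. -/
def ww (x : ι → F) (i j : ι) : F := x i * x j / (x i - x j) ^ 2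

lemma rr_self (x : ι → F) (i : ι) : rr x i i = 0 := by simp [rr]
lemma ww_self (x : ι → F) (i : ι) : ww x i i = 0 := by simp [ww]

lemma ww_symm (x : ι → F) (i j : ι) : ww x i j = ww x j i := by
  unfold ww
  rw [mul_comm, ← neg_sub, neg_sq]

lemma rr_add {x : ι → F} (hx : Function.Injective x) {i j : ι} (h : i ≠ j) :
    rr x i j + rr x j i = 1 := by
  have h1 : x i - x j ≠ 0 := sub_ne_zero.mpr (hx.ne h)
  have h2 : x j - x i ≠ 0 := sub_ne_zero.mpr (hx.ne h.symm)
  unfold rr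
  field_simp
  ring

/-- The three-index identity behind the off-diagonal entries of the Lax equation. -/
lemma three_off {x : ι → F} (hx : Function.Injective x) {i j : ι} (h : i ≠ j) (l : ι) :
    ww x i l * rr x l j - ww x i l * rr x i j - rr x i l * ww x l j + rr x i j * ww x l j
      = (if l = i then ww x i j * rr x i j else 0) - (if l = j then ww x i j * rr x i j else 0) := by
  have h1 : x i - x j ≠ 0 := sub_ne_zero.mpr (hx.ne h)
  by_cases hi : l = i
  · subst hi
    simp [rr_self, ww_self, h]
    ring
  by_cases hj : l = j
  · subst hj
    simp [rr_self, ww_self, Ne.symm h]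
  have h2 : x i - x l ≠ 0 := sub_ne_zero.mpr (hx.ne (Ne.symm hi))
  have h3 : x l - x j ≠ 0 := sub_ne_zero.mpr (hx.ne hj)
  simp only [hi, hj, if_false]
  unfold rr ww
  field_simp
  ring

/-- The three-index identity behind the diagonal entries of the Lax equation. -/
lemma three_diag {x : ι → F} (hx : Function.Injective x) (i l j : ι) :
    ww x i j * (rr x i l - rr x j l) + ww x i l * (rr x i j - rr x l j)
      = (if l = j then 2 * (ww x i j * rr x i j) else 0) - (if l = i then ww x i j * rr x j i else 0)
        - (if j = i then ww x i l * rr x l i else 0) := by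
  by_cases hi : l = i
  · subst hi
    by_cases hj : j = l
    · subst hj
      simp [rr_self, ww_self]
    · simp [rr_self, ww_self, hj, Ne.symm hj]
  by_cases hij : j = i
  · subst hij
    simp [rr_self, ww_self, hi]
  by_cases hj : l = j
  · subst hj
    simp [rr_self, hi]
    ring
  have h1 : x i - x j ≠ 0 := sub_ne_zero.mpr (hx.ne (Ne.symm hij))
  have h2 : x i - x l ≠ 0 := sub_ne_zero.mpr (hx.ne (Ne.symm hi))
  have h3 : x l - x j ≠ 0 := sub_ne_zero.mpr (hx.ne hj)
  have h4 : x j - x l ≠ 0 := sub_ne_zero.mpr (hx.ne (Ne.symm hj))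
  simp only [hi, hj, hij, if_false]
  unfold rr ww
  field_simp
  ring

/-- The derivations `δ` act on the coordinates as Euler derivations. -/
def EulerOn (δ : ι → Derivation ℂ F F) (x : ι → F) : Prop :=
  ∀ i j, δ i (x j) = if j = i then x j else 0

/-- `κ_lij = ∂_l(x_j/x_i) / (x_j/x_i)`. -/
def kk (l i j : ι) : F := (if j = l then 1 else 0) - (if i = l then 1 else 0)

lemma der_rr {δ : ι → Derivation ℂ F F} {x : ι → F} (hx : Function.Injective x)
    (hδ : EulerOn δ x) (l i j : ι) : δ l (rr x i j) = kk l i j * ww x i j := by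
  by_cases h : i = j
  · subst h
    simp [rr_self, ww_self]
  have h1 : x i - x j ≠ 0 := sub_ne_zero.mpr (hx.ne h)
  have e : rr x i j * (x i - x j) = x i := by unfold rr; field_simp
  have e' := congrArg (δ l) e
  rw [Derivation.leibniz, map_sub, hδ, hδ, smul_eq_mul, smul_eq_mul] at e'
  have e2 : (x i - x j) * δ l (rr x i j) = (x i - x j) * (kk l i j * ww x i j) := by
    rw [eq_sub_of_add_eq' e']
    unfold kk rr ww
    split_ifs <;> field_simp <;> ring
  exact mul_left_cancel₀ h1 e2

lemma ww_eq {x : ι → F} (hx : Function.Injective x) {i j : ι} (h : i ≠ j) :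
    ww x i j = rr x i j ^ 2 - rr x i j := by
  have h1 : x i - x j ≠ 0 := sub_ne_zero.mpr (hx.ne h)
  unfold rr ww
  field_simp
  ring

lemma der_ww {δ : ι → Derivation ℂ F F} {x : ι → F} (hx : Function.Injective x)
    (hδ : EulerOn δ x) (l i j : ι) :
    δ l (ww x i j) = kk l i j * ((2 * rr x i j - 1) * ww x i j) := by
  by_cases h : i = j
  · subst h
    simp [ww_self]
  rw [ww_eq hx h, map_sub, pow_two, Derivation.leibniz, der_rr hx hδ, ww_eq hx h]
  simp only [smul_eq_mul]
  ring

/-! ### Coefficients of the Lax equation -/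

/-- The data entering the deformed CMS integrals: coordinates `x`, Euler derivations `δ`, and
constants `c i = k^{p(i)}`, `g i = k^{1-p(i)}`. Only `c i * g i = k` and the independence of
`c i + g i` from `i` matter for the Lax equation. -/
structure CMS (ι F : Type*) [Fintype ι] [DecidableEq ι] [Field F] [Algebra ℂ F] where
  x : ι → F
  hx : Function.Injective x
  δ : ι → Derivation ℂ F F
  hδ : EulerOn δ x
  c : ι → ℂ
  g : ι → ℂ
  k : ℂ
  hk : k ≠ 0
  hcg : ∀ i, c i * g i = k
  hsum : ∀ i j, c i + g i = c j + g j

namespace CMS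

variable (S : CMS ι F)

/-- The constant `c i` as an element of `F`. -/
def cF (i : ι) : F := algebraMap ℂ F (S.c i)
/-- The constant `g i` as an element of `F`. -/
def gF (i : ι) : F := algebraMap ℂ F (S.g i)

lemma der_c (l i : ι) (f : F) : S.δ l (S.cF i * f) = S.cF i * S.δ l f := by
  simp [cF, Derivation.leibniz]
lemma der_g (l i : ι) (f : F) : S.δ l (S.gF i * f) = S.gF i * S.δ l f := by
  simp [gF, Derivation.leibniz]
lemma der_c' (l i : ι) : S.δ l (S.cF i) = 0 := by simp [cF]
lemma der_g' (l i : ι) : S.δ l (S.gF i) = 0 := by simp [gF]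
lemma der_two (l : ι) (f : F) : S.δ l (2 * f) = 2 * S.δ l f := by
  rw [two_mul, map_add, two_mul]
lemma hcgF (i : ι) : S.cF i * S.gF i = algebraMap ℂ F S.k := by
  simp [cF, gF, ← map_mul, S.hcg]
lemma hsumF (i j : ι) : S.cF i + S.gF i = S.cF j + S.gF j := by
  simp [cF, gF, ← map_add, S.hsum i j]

/-- `r_ij` for the given coordinates. -/
def r (i j : ι) : F := rr S.x i j
/-- `w_ij` for the given coordinates. -/
def w (i j : ι) : F := ww S.x i j

/-- `G_i = Σ_j g_j r_ij`. -/
def G (i : ι) : F := ∑ j, S.gF j * S.r i j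
/-- `W_i = Σ_j g_j w_ij`. -/
def W (i : ι) : F := ∑ j, S.gF j * S.w i j
/-- `B_i = Σ_{j ≠ i} g_j (x_i + x_j)/(x_i - x_j)`, the first-order coefficients of `-L_2`. -/
def B (i : ι) : F := 2 * S.G i + S.gF i - ∑ j, S.gF j
/-- The entries of the second Lax matrix. -/
def a (i j : ι) : F := 2 * S.gF j * S.w i j - if i = j then 2 * S.W i else 0

lemma w_self (i : ι) : S.w i i = 0 := ww_self _ _
lemma r_self (i : ι) : S.r i i = 0 := rr_self _ _
lemma w_symm (i j : ι) : S.w i j = S.w j i := ww_symm _ _ _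
lemma der_r (l i j : ι) : S.δ l (S.r i j) = kk l i j * S.w i j := der_rr S.hx S.hδ l i j
lemma der_w (l i j : ι) : S.δ l (S.w i j) = kk l i j * ((2 * S.r i j - 1) * S.w i j) :=
  der_ww S.hx S.hδ l i j

lemma der_kk (l a i j : ι) (f : F) : S.δ l (kk a i j * f) = kk a i j * S.δ l f := by
  unfold kk
  split_ifs <;> simp

lemma sum_kk {M : Type*} [Ring M] (φ : F →+* M) (i j : ι) (u : ι → M) :
    ∑ l, φ (kk l i j) * u l = u j - u i := by
  simp [kk, sub_mul, Finset.sum_sub_distrib, apply_ite φ, ite_mul]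

/-- The action of `L_2` on functions:
`Δ f = Σ_l c_l ∂_l² f - B_l ∂_l f`. -/
def lap (f : F) : F := ∑ l, (S.cF l * S.δ l (S.δ l f) - S.B l * S.δ l f)

lemma lap_r (i j : ι) : S.lap (S.r i j) =
    ((S.cF i + S.cF j) * (2 * S.r i j - 1) + S.B i - S.B j) * S.w i j := by
  by_cases h : i = j
  · subst h
    simp [lap, r_self, w_self]
  have e : ∀ l, S.cF l * S.δ l (S.δ l (S.r i j)) - S.B l * S.δ l (S.r i j)
      = RingHom.id F (kk l i j) * (kk l i j * (S.cF l * ((2 * S.r i j - 1) * S.w i j))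
        - S.B l * S.w i j) := by
    intro l
    simp only [der_r, der_kk, der_w, RingHom.id_apply]
    ring
  unfold lap
  rw [Finset.sum_congr rfl fun l _ => e l, sum_kk]
  simp only [kk, h, Ne.symm h, if_true, if_false]
  ring

lemma lap_add (f f' : F) : S.lap (f + f') = S.lap f + S.lap f' := by
  simp only [lap, ← Finset.sum_add_distrib, map_add]
  exact Finset.sum_congr rfl fun l _ => by ring

lemma lap_g (j : ι) (f : F) : S.lap (S.gF j * f) = S.gF j * S.lap f := by
  simp only [lap, Finset.mul_sum, der_g]
  exact Finset.sum_congr rfl fun l _ => by ring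

lemma lap_G (i : ι) : S.lap (S.G i) = ∑ j, S.gF j * S.lap (S.r i j) := by
  simp only [G, ← lap_g]
  exact map_sum (AddMonoidHom.mk' S.lap S.lap_add) _ _

lemma der_G (l i : ι) : S.δ l (S.G i) = S.gF l * S.w i l - if i = l then S.W i else 0 := by
  simp only [G, map_sum, der_g, der_r]
  simp only [kk, sub_mul, mul_sub, Finset.sum_sub_distrib, ite_mul, mul_ite, one_mul, zero_mul,
    mul_zero, Finset.sum_ite_eq', Finset.mem_univ, if_true]
  split_ifs <;> simp [W]

lemma der_B (l i : ι) : S.δ l (S.B i) = 2 * S.δ l (S.G i) := by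
  simp only [B, map_sub, map_add, map_sum, der_two, der_g', Finset.sum_const_zero, sub_zero,
    add_zero]

/-- The first-order part of the Lax equation. -/
lemma first_order (l i j : ι) :
    (if i = j then S.cF i * S.δ i (S.B l) - 2 * S.cF l * S.δ l (S.G i) else 0)
      + 2 * S.cF l * S.δ l (S.gF j * S.r i j)
    = (if l = j then S.a i j * S.cF j else 0) - (if l = i then S.cF i * S.a i j else 0) := by
  have h1 := S.hcgF i
  have h2 := S.hcgF l
  by_cases h : i = j
  · subst h
    by_cases hl : l = i
    · subst hl
      simp only [if_true, der_B, der_G, der_g, r_self, map_zero]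
      ring
    · simp only [if_true, der_B, der_G, der_g, r_self, map_zero, hl, Ne.symm hl, if_false,
        S.w_symm l i]
      linear_combination 2 * S.w i l * (h1 - h2)
  · simp only [h, if_false, der_g, der_r, a, kk]
    by_cases hl : l = i
    · subst hl
      simp only [h, Ne.symm h, if_true, if_false]
      ring
    · by_cases hj : l = j
      · subst hj
        simp only [h, Ne.symm h, if_true, if_false]
        ring
      · simp only [hl, Ne.symm hl, hj, Ne.symm hj, if_false]
        ring

lemma G_sub (i m : ι) : S.G i - S.G m = ∑ l, S.gF l * (S.r i l - S.r m l) := by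
  simp [G, mul_sub, Finset.sum_sub_distrib]

/-- The double sum of three-index terms collapses to its coincident-index part. -/
lemma sum_diag (i : ι) : ∑ m, S.gF m * (S.w i m * (S.G i - S.G m))
    = ∑ m, S.gF m * (S.w i m * (S.gF m * S.r i m - S.gF i * S.r m i)) := by
  have e : ∑ m, S.gF m * (S.w i m * (S.G i - S.G m))
      = ∑ m, ∑ l, S.gF m * S.gF l * (S.w i m * (S.r i l - S.r m l)) := by
    refine Finset.sum_congr rfl fun m _ => ?_
    rw [G_sub, Finset.mul_sum, Finset.mul_sum]
    exact Finset.sum_congr rfl fun l _ => by ring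
  have e2 : ∑ m, S.gF m * (S.w i m * (S.G i - S.G m))
      = ∑ m, ∑ l, S.gF m * S.gF l * (S.w i l * (S.r i m - S.r l m)) := by
    rw [e, Finset.sum_comm]
    exact Finset.sum_congr rfl fun m _ => Finset.sum_congr rfl fun l _ => by ring
  have two : (2 : F) ≠ 0 := by
    have := charZero_of_injective_algebraMap (algebraMap ℂ F).injective
    exact two_ne_zero
  apply mul_left_cancel₀ two
  rw [two_mul]
  nth_rw 1 [e]
  rw [e2, ← Finset.sum_add_distrib]
  simp only [← Finset.sum_add_distrib, ← mul_add]
  have t := fun m l => three_diag S.hx i l m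
  simp only [w, r, t]
  simp only [mul_sub, mul_ite, mul_zero, Finset.sum_sub_distrib, Finset.sum_ite_eq', Finset.mem_univ, if_true]
  rw [Finset.sum_comm (f := fun m l => if m = i then _ else _)]
  simp only [Finset.sum_ite_eq', Finset.mem_univ, if_true]
  simp only [← Finset.sum_sub_distrib, Finset.mul_sum]
  exact Finset.sum_congr rfl fun l _ => by ring

lemma der_W (i : ι) : S.δ i (S.W i) = -∑ m, S.gF m * ((2 * S.r i m - 1) * S.w i m) := by
  simp only [W, map_sum, der_g, der_w, ← Finset.sum_neg_distrib]
  refine Finset.sum_congr rfl fun m _ => ?_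
  by_cases h : m = i
  · subst h; simp [w_self]
  · simp [kk, h]

/-- The zeroth-order part of the Lax equation. -/
lemma zeroth_order (i j : ι) :
    S.lap (S.gF j * S.r i j) - (if i = j then S.lap (S.G i) else 0)
    = -(S.cF i * S.δ i (S.a i j)) + S.a i j * (S.G i - S.G j)
      + ∑ l, (S.a i l * (S.gF j * S.r l j) - S.gF l * S.r i l * S.a l j) := by
  by_cases h : i = j
  · subst h
    have e : ∑ l, (S.a i l * (S.gF i * S.r l i) - S.gF l * S.r i l * S.a l i)
        = -(2 * S.gF i * ∑ l, S.gF l * ((2 * S.r i l - 1) * S.w i l)) := by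
      rw [Finset.mul_sum, ← Finset.sum_neg_distrib]
      refine Finset.sum_congr rfl fun l _ => ?_
      by_cases hl : i = l
      · subst hl
        simp [r_self, w_self]
      · have := rr_add S.hx hl
        change S.r i l + S.r l i = 1 at this
        simp only [a, hl, Ne.symm hl, if_false, S.w_symm l i]
        linear_combination 2 * S.gF l * S.w i l * S.gF i * this
    have e2 : S.a i i = - (2 * S.W i) := by simp [a, w_self]
    rw [e, e2, lap_g, lap_G]
    simp only [r_self, map_neg, der_two, der_W, if_true, sub_self, lap_r]
    have e3 : ∑ m, S.gF m * (((S.cF i + S.cF m) * (2 * S.r i m - 1) + S.B i - S.B m) * S.w i m)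
      = ∑ m, S.gF m * (((S.cF i + S.cF m) * (2 * S.r i m - 1) + S.gF i - S.gF m) * S.w i m) +
       2 * ∑ m, S.gF m * (S.w i m * (S.G i - S.G m)) := by
      rw [Finset.mul_sum, ← Finset.sum_add_distrib]
      refine Finset.sum_congr rfl fun l _ => ?_
      unfold B
      ring
    have key : ∑ m, (S.gF m * (((S.cF i + S.cF m) * (2 * S.r i m - 1) + S.gF i - S.gF m) * S.w i m)
        + 2 * (S.gF m * (S.w i m * (S.gF m * S.r i m - S.gF i * S.r m i)))
        - 2 * S.cF i * (S.gF m * ((2 * S.r i m - 1) * S.w i m))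
        - 2 * S.gF i * (S.gF m * ((2 * S.r i m - 1) * S.w i m))) = 0 := by
      refine Finset.sum_eq_zero fun m _ => ?_
      by_cases hm : i = m
      · subst hm
        simp [w_self]
      have h1 := rr_add S.hx hm
      change S.r i m + S.r m i = 1 at h1
      have hs := S.hsumF i m
      have h2 : S.r m i = 1 - S.r i m := by linear_combination h1
      rw [h2]
      linear_combination -(S.gF m * (2 * S.r i m - 1) * S.w i m) * hs
    rw [e3, sum_diag]
    simp only [Finset.sum_add_distrib, Finset.sum_sub_distrib, ← Finset.mul_sum] at key
    have l0 : S.lap 0 = 0 := by simp [lap]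
    linear_combination -key + S.gF i * l0
  · have e : ∑ l, (S.a i l * (S.gF j * S.r l j) - S.gF l * S.r i l * S.a l j)
        = S.gF j * (∑ l, 2 * S.gF l * (S.w i l * S.r l j - S.w i l * S.r i j - S.r i l * S.w l j
            + S.r i j * S.w l j)) := by
      have e1 : ∑ l, (if i = l then 2 * S.W i else 0) * (S.gF j * S.r l j)
          = ∑ l, 2 * S.gF l * S.w i l * (S.gF j * S.r i j) := by
        simp only [ite_mul, zero_mul, Finset.sum_ite_eq, Finset.mem_univ, if_true, W,
          Finset.mul_sum, Finset.sum_mul]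
        exact Finset.sum_congr rfl fun l _ => by ring
      have e2 : ∑ l, S.gF l * S.r i l * (if l = j then 2 * S.W l else 0)
          = ∑ l, 2 * S.gF l * S.w l j * (S.gF j * S.r i j) := by
        simp only [mul_ite, mul_zero, Finset.sum_ite_eq', Finset.mem_univ, if_true, W,
          Finset.mul_sum]
        exact Finset.sum_congr rfl fun l _ => by rw [S.w_symm]; ring
      simp only [a, sub_mul, mul_sub, Finset.sum_sub_distrib]
      rw [e1, e2, Finset.mul_sum]
      simp only [← Finset.sum_sub_distrib]
      exact Finset.sum_congr rfl fun l _ => by ring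
    have t : ∀ l, S.w i l * S.r l j - S.w i l * S.r i j - S.r i l * S.w l j + S.r i j * S.w l j
      = (if l = i then S.w i j * S.r i j else 0) - (if l = j then S.w i j * S.r i j else 0) :=
      three_off S.hx h
    rw [e]
    simp only [t, mul_sub, mul_ite, mul_zero, Finset.sum_sub_distrib, Finset.sum_ite_eq',
      Finset.mem_univ, if_true, h, if_false, lap_g, lap_r, a, sub_zero]
    rw [mul_assoc 2, der_two, der_g, der_w]
    have hs := S.hsumF i j
    simp only [kk, Ne.symm h, if_true, if_false, B]
    linear_combination  (-S.gF j * (2 * S.r i j - 1) * S.w i j) * hs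

/-! ### The quantum Lax pair -/

/-- The vectors `M^p e`, where `M` is the quantum Lax matrix and `e = (1,…,1)`; for `p ≥ 1` their
entries are the operators `∂_i^{(p)}`. Functions act through `φ`, Euler derivations are `d`. -/
def vec (φ : F →+* D) (d : ι → D) : ℕ → ι → D
  | 0 => fun _ => 1
  | p + 1 => fun i => φ (S.cF i) * d i * vec φ d p i
      - ∑ j, φ (S.gF j * S.r i j) * (vec φ d p i - vec φ d p j)

/-- The deformed CMS integrals `L_p = Σ_i c_i⁻¹ (M^p e)_i`, in the ring `D`. -/
def Lop (φ : F →+* D) (d : ι → D) (p : ℕ) : D := ∑ i, φ (S.cF i)⁻¹ * S.vec φ d p i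

/-- The quantum Lax matrix. -/
def M (φ : F →+* D) (d : ι → D) (i j : ι) : D :=
  (if i = j then φ (S.cF i) * d i - φ (S.G i) else 0) + φ (S.gF j * S.r i j)

/-- The operator `L_2` in normal order. -/
def ham (φ : F →+* D) (d : ι → D) : D := ∑ l, (φ (S.cF l) * d l * d l - φ (S.B l) * d l)

/-- `φ` and `d` represent functions and derivations: `[d_i, f] = ∂_i f` and `[d_i, d_j] = 0`. -/
structure Rep (φ : F →+* D) (d : ι → D) : Prop where
  comm_fun : ∀ i f, d i * φ f = φ f * d i + φ (S.δ i f)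
  comm : ∀ i j, d i * d j = d j * d i

variable {φ : F →+* D} {d : ι → D}

lemma vec_succ (p : ℕ) (i : ι) :
    S.vec φ d (p + 1) i = ∑ j, S.M φ d i j * S.vec φ d p j := by
  simp only [vec, M, add_mul, ite_mul, zero_mul, Finset.sum_add_distrib, Finset.sum_ite_eq,
    Finset.mem_univ, if_true, mul_sub, Finset.sum_sub_distrib, sub_mul, G, map_sum, Finset.sum_mul]
  abel

variable (h : S.Rep φ d)
include h

lemma d_c (i l : ι) : d i * φ (S.cF l) = φ (S.cF l) * d i := by
  rw [h.comm_fun, der_c', map_zero, add_zero]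

lemma ham_fun (f : F) : S.ham φ d * φ f - φ f * S.ham φ d
    = φ (S.lap f) + ∑ l, φ (2 * S.cF l * S.δ l f) * d l := by
  simp only [ham, lap, map_sum, Finset.sum_mul, Finset.mul_sum, ← Finset.sum_sub_distrib,
    ← Finset.sum_add_distrib]
  refine Finset.sum_congr rfl fun l _ => ?_
  have e1 := h.comm_fun l f
  have e2 := h.comm_fun l (S.δ l f)
  have c1 : φ f * φ (S.cF l) = φ (S.cF l) * φ f := by rw [← map_mul, mul_comm, map_mul]
  have c2 : φ f * φ (S.B l) = φ (S.B l) * φ f := by rw [← map_mul, mul_comm, map_mul]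
  have e3 : d l * d l * φ f = φ f * d l * d l + 2 * φ (S.δ l f) * d l + φ (S.δ l (S.δ l f)) := by
    rw [mul_assoc, e1, mul_add, e2, ← mul_assoc, e1]
    noncomm_ring
  calc _ = φ (S.cF l) * (d l * d l * φ f) - φ (S.B l) * (d l * φ f)
        - (φ f * φ (S.cF l)) * d l * d l + (φ f * φ (S.B l)) * d l := by noncomm_ring
    _ = _ := by
      rw [e3, e1, c1, c2]
      simp only [map_sub, map_mul, map_ofNat]
      noncomm_ring

lemma ham_der (i : ι) : S.ham φ d * (φ (S.cF i) * d i) - φ (S.cF i) * d i * S.ham φ d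
    = ∑ l, φ (S.cF i * S.δ i (S.B l)) * d l := by
  simp only [ham, Finset.sum_mul, Finset.mul_sum, ← Finset.sum_sub_distrib]
  refine Finset.sum_congr rfl fun l _ => ?_
  have e1 := h.comm_fun i (S.B l)
  have e2 := h.comm i l
  have c1 : φ (S.cF i) * φ (S.cF l) = φ (S.cF l) * φ (S.cF i) := by
    rw [← map_mul, mul_comm, map_mul]
  have c2 : φ (S.B l) * φ (S.cF i) = φ (S.cF i) * φ (S.B l) := by
    rw [← map_mul, mul_comm, map_mul]
  have e3 : φ (S.cF l) * d l * d l * (φ (S.cF i) * d i)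
      = φ (S.cF i) * d i * (φ (S.cF l) * d l * d l) := by
    have t1 : d l * d l * φ (S.cF i) = φ (S.cF i) * d l * d l := by
      rw [mul_assoc, S.d_c h, ← mul_assoc, S.d_c h]
    have t2 : d l * d l * d i = d i * d l * d l := by
      rw [mul_assoc, ← e2, ← mul_assoc, ← e2]
    have t3 := S.d_c h i l
    calc _ = φ (S.cF l) * (d l * d l * φ (S.cF i)) * d i := by noncomm_ring
      _ = (φ (S.cF l) * φ (S.cF i)) * (d l * d l * d i) := by rw [t1]; noncomm_ring
      _ = φ (S.cF i) * (φ (S.cF l) * d i) * d l * d l := by rw [t2, ← c1]; noncomm_ring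
      _ = _ := by rw [← t3]; noncomm_ring
  have e4 : φ (S.B l) * d l * (φ (S.cF i) * d i) = φ (S.cF i) * φ (S.B l) * d i * d l := by
    calc _ = φ (S.B l) * (d l * φ (S.cF i)) * d i := by noncomm_ring
      _ = (φ (S.B l) * φ (S.cF i)) * (d l * d i) := by rw [S.d_c h]; noncomm_ring
      _ = _ := by rw [c2, ← e2]; noncomm_ring
  have e5 : φ (S.cF i) * d i * (φ (S.B l) * d l)
      = φ (S.cF i) * φ (S.B l) * d i * d l + φ (S.cF i * S.δ i (S.B l)) * d l := by
    calc _ = φ (S.cF i) * (d i * φ (S.B l)) * d l := by noncomm_ring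
      _ = _ := by rw [e1, map_mul]; noncomm_ring
  rw [sub_mul, mul_sub, e3, e4, e5]
  abel

/-- The quantum Lax equation `[L_2, M] = [A, M]`. -/
lemma lax (i j : ι) : S.ham φ d * S.M φ d i j - S.M φ d i j * S.ham φ d
    = ∑ l, (φ (S.a i l) * S.M φ d l j - S.M φ d i l * φ (S.a l j)) := by
  have key : S.ham φ d * S.M φ d i j - S.M φ d i j * S.ham φ d
      = φ (S.lap (S.gF j * S.r i j) - (if i = j then S.lap (S.G i) else 0))
        + ∑ l, φ ((if i = j then S.cF i * S.δ i (S.B l) - 2 * S.cF l * S.δ l (S.G i) else 0)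
      + 2 * S.cF l * S.δ l (S.gF j * S.r i j)) * d l := by
    have h1 := S.ham_fun h (S.gF j * S.r i j)
    by_cases hij : i = j
    · subst hij
      have h2 := S.ham_fun h (S.G i)
      have h3 := S.ham_der h i
      simp only [M, if_true, map_add, map_sub, add_mul, sub_mul, Finset.sum_add_distrib,
        Finset.sum_sub_distrib]
      rw [← h3, ← sub_eq_of_eq_add' h2, ← sub_eq_of_eq_add' h1]
      noncomm_ring
    · simp only [M, hij, if_false, zero_add, sub_zero]
      exact h1
  rw [key, zeroth_order]
  simp only [first_order]
  have hs : ∑ l, φ ((if l = j then S.a i j * S.cF j else 0)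
      - (if l = i then S.cF i * S.a i j else 0)) * d l
      = φ (S.a i j * S.cF j) * d j - φ (S.cF i * S.a i j) * d i := by
    simp [sub_mul, Finset.sum_sub_distrib, apply_ite φ, ite_mul]
  have e1 := h.comm_fun i (S.a i j)
  have e2 : ∑ l, (φ (S.a i l) * S.M φ d l j - S.M φ d i l * φ (S.a l j))
      = φ (S.a i j) * (φ (S.cF j) * d j - φ (S.G j))
        - (φ (S.cF i) * d i - φ (S.G i)) * φ (S.a i j)
        + φ (∑ l, (S.a i l * (S.gF j * S.r l j) - S.gF l * S.r i l * S.a l j)) := by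
    simp only [M, mul_add, add_mul, Finset.sum_sub_distrib, Finset.sum_add_distrib, mul_ite,
      ite_mul, mul_zero, zero_mul, Finset.sum_ite_eq, Finset.sum_ite_eq', Finset.mem_univ, if_true,
      map_sub, map_sum, ← map_mul]
    abel
  rw [hs, e2, sub_mul, mul_assoc (φ (S.cF i)), e1]
  have c1 : φ (S.G i) * φ (S.a i j) = φ (S.a i j) * φ (S.G i) := by
    rw [← map_mul, mul_comm, map_mul]
  rw [c1]
  simp only [map_add, map_sub, map_neg, map_mul]
  noncomm_ring

lemma sum_a (i : ι) : ∑ j, S.a i j = 0 := by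
  simp [a, Finset.sum_sub_distrib, W, Finset.mul_sum, mul_assoc]

lemma ham_vec (p : ℕ) (i : ι) : S.ham φ d * S.vec φ d p i - S.vec φ d p i * S.ham φ d
    = ∑ j, φ (S.a i j) * S.vec φ d p j := by
  induction p generalizing i with
  | zero => simp [vec, ← map_sum, S.sum_a h]
  | succ p ih =>
    simp only [vec_succ, Finset.mul_sum, Finset.sum_mul]
    have e : ∀ j, S.ham φ d * (S.M φ d i j * S.vec φ d p j)
        - S.M φ d i j * S.vec φ d p j * S.ham φ d
        = ∑ l, (φ (S.a i l) * (S.M φ d l j * S.vec φ d p j)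
          - S.M φ d i l * (φ (S.a l j) * S.vec φ d p j))
          + ∑ l, S.M φ d i j * (φ (S.a j l) * S.vec φ d p l) := by
      intro j
      calc _ = (S.ham φ d * S.M φ d i j - S.M φ d i j * S.ham φ d) * S.vec φ d p j
          + S.M φ d i j * (S.ham φ d * S.vec φ d p j - S.vec φ d p j * S.ham φ d) := by
            noncomm_ring
        _ = _ := by
          rw [S.lax h, ih, Finset.sum_mul, Finset.mul_sum]
          congr 1
          exact Finset.sum_congr rfl fun l _ => by noncomm_ring
    rw [← Finset.sum_sub_distrib, Finset.sum_congr rfl fun j _ => e j]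
    simp only [Finset.sum_add_distrib, Finset.sum_sub_distrib]
    rw [Finset.sum_comm, Finset.sum_comm (f := fun j l => S.M φ d i l * (φ (S.a l j) * _))]
    abel

lemma c_ne (i : ι) : S.cF i ≠ 0 := by
  intro h0
  have := S.hcgF i
  rw [h0, zero_mul] at this
  exact S.hk ((map_eq_zero _).mp this.symm)

lemma ham_Lop (p : ℕ) : S.ham φ d * S.Lop φ d p = S.Lop φ d p * S.ham φ d := by
  rw [← sub_eq_zero]
  have hc : ∀ i, S.ham φ d * φ (S.cF i)⁻¹ = φ (S.cF i)⁻¹ * S.ham φ d := by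
    intro i
    rw [← sub_eq_zero, S.ham_fun h]
    have : ∀ l, S.δ l (S.cF i)⁻¹ = 0 := by
      intro l
      rw [cF, ← map_inv₀, Derivation.map_algebraMap]
    simp [lap, this]
  have e : ∀ i, S.ham φ d * (φ (S.cF i)⁻¹ * S.vec φ d p i)
      - φ (S.cF i)⁻¹ * S.vec φ d p i * S.ham φ d
      = ∑ j, φ ((S.cF i)⁻¹ * S.a i j) * S.vec φ d p j := by
    intro i
    rw [← mul_assoc, hc, mul_assoc, mul_assoc, ← mul_sub, S.ham_vec h, Finset.mul_sum]
    simp only [map_mul, mul_assoc]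
  simp only [Lop, Finset.mul_sum, Finset.sum_mul]
  rw [← Finset.sum_sub_distrib, Finset.sum_congr rfl fun i _ => e i, Finset.sum_comm]
  refine Finset.sum_eq_zero fun j _ => ?_
  rw [← Finset.sum_mul, ← map_sum]
  -- `Σ_i c_i⁻¹ a_ij = 0` because `a_ij / c_i` is symmetric and the rows of `a` sum to zero.
  have sy : ∀ i, (S.cF i)⁻¹ * S.a i j = (S.cF j)⁻¹ * S.a j i := by
    intro i
    have h1 := S.hcgF i
    have h2 := S.hcgF j
    have n1 := S.c_ne h i
    have n2 := S.c_ne h j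
    by_cases hij : i = j
    · rw [hij]
    · simp only [a, hij, Ne.symm hij, if_false, S.w_symm j i]
      field_simp
      linear_combination 2 * S.w i j * (h2 - h1)
  rw [Finset.sum_congr rfl fun i _ => sy i, ← Finset.mul_sum, S.sum_a h]
  simp

lemma Lop_two : S.Lop φ d 2 = S.ham φ d := by
  have hc : ∀ i, φ (S.cF i)⁻¹ * φ (S.cF i) = 1 := by
    intro i
    rw [← map_mul, inv_mul_cancel₀ (S.c_ne h i), map_one]
  have e : ∀ i, φ (S.cF i)⁻¹ * S.vec φ d 2 i = φ (S.cF i) * d i * d i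
      - ∑ j, (φ (S.gF j * S.r i j) * d i - φ ((S.cF i)⁻¹ * (S.cF j * S.gF j) * S.r i j) * d j) := by
    intro i
    simp only [vec, sub_self, mul_zero, Finset.sum_const_zero, sub_zero, mul_one]
    rw [mul_sub, Finset.mul_sum]
    congr 1
    · calc _ = (φ (S.cF i)⁻¹ * φ (S.cF i)) * (d i * φ (S.cF i)) * d i := by noncomm_ring
        _ = _ := by rw [hc, S.d_c h, one_mul]
    · refine Finset.sum_congr rfl fun j _ => ?_
      have t1 : (S.cF i)⁻¹ * (S.gF j * S.r i j) * S.cF i = S.gF j * S.r i j := by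
        field_simp [S.c_ne h i]
      have t2 : (S.cF i)⁻¹ * (S.gF j * S.r i j) * S.cF j
          = (S.cF i)⁻¹ * (S.cF j * S.gF j) * S.r i j := by ring
      rw [← t2]
      nth_rw 2 [← t1]
      simp only [map_mul]
      noncomm_ring
  have e2 : ∑ i, ∑ j, φ ((S.cF i)⁻¹ * (S.cF j * S.gF j) * S.r i j) * d j
      = ∑ l, φ (∑ j, S.gF j * S.r j l) * d l := by
    rw [Finset.sum_comm]
    refine Finset.sum_congr rfl fun l _ => ?_
    rw [← Finset.sum_mul, ← map_sum]
    congr 2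
    refine Finset.sum_congr rfl fun j _ => ?_
    rw [S.hcgF l, ← S.hcgF j]
    field_simp [S.c_ne h j]
  rw [Lop, Finset.sum_congr rfl fun i _ => e i]
  simp only [Finset.sum_sub_distrib]
  rw [e2]
  simp only [ham, ← Finset.sum_mul, ← map_sum, ← Finset.sum_sub_distrib]
  refine Finset.sum_congr rfl fun l _ => ?_
  rw [← sub_mul, ← map_sub]
  congr 3
  -- `Σ_j g_j r_jl = Σ_{j ≠ l} g_j (1 - r_lj)`
  have e3 : ∑ j, S.gF j * S.r j l = ∑ j, (S.gF j - S.gF j * S.r l j - if j = l then S.gF j else 0) := by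
    refine Finset.sum_congr rfl fun j _ => ?_
    by_cases hj : j = l
    · subst hj
      simp [r_self]
    · have h1 := rr_add S.hx hj
      change S.r j l + S.r l j = 1 at h1
      simp only [hj, if_false]
      linear_combination S.gF j * h1
  rw [e3]
  simp only [Finset.sum_sub_distrib, Finset.sum_ite_eq', Finset.mem_univ, if_true, B, G]
  ring

end CMS

end Lax

/-! ### Hahn series -/

section Hahn

/-- Exponent vectors, ordered lexicographically. -/
abbrev Exps (N : ℕ) : Type := Lex (Fin N → ℤ)

/-- Coefficientwise application of a ring homomorphism to Hahn series. -/
def mapH {Γ A B : Type*} [AddCommGroup Γ] [LinearOrder Γ] [IsOrderedAddMonoid Γ] [CommRing A]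
    [CommRing B] (f : A →+* B) : HahnSeries Γ A →+* HahnSeries Γ B where
  toFun x := x.map f
  map_zero' := by ext; simp
  map_one' := HahnSeries.map_one f.toMonoidWithZeroHom
  map_add' x y := by ext; simp
  map_mul' x y := HahnSeries.map_mul f.toNonUnitalRingHom

section
variable {Γ A B : Type*} [AddCommGroup Γ] [LinearOrder Γ] [IsOrderedAddMonoid Γ] [CommRing A]
  [CommRing B]

lemma mapH_coeff (f : A →+* B) (x : HahnSeries Γ A) (γ : Γ) :
    (mapH f x).coeff γ = f (x.coeff γ) := rfl

lemma mapH_single (f : A →+* B) (γ : Γ) (a : A) :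
    mapH f (HahnSeries.single γ a) = HahnSeries.single γ (f a) := by
  ext γ'
  simp [mapH_coeff, HahnSeries.coeff_single, apply_ite f]

lemma orderTop_le_mapH (f : A →+* B) (x : HahnSeries Γ A) :
    x.orderTop ≤ (mapH f x).orderTop := by
  rw [HahnSeries.le_orderTop_iff_forall]
  intro γ h
  rw [mapH_coeff, HahnSeries.coeff_eq_zero_of_lt_orderTop h, map_zero]

/-- The diagonal operator multiplying the coefficient at `γ` by `f γ`. -/
def diagOp (f : Γ → A) : HahnSeries Γ A →ₗ[A] HahnSeries Γ A where
  toFun x :=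
    { coeff := fun γ => f γ * x.coeff γ
      isPWO_support' := x.isPWO_support.mono fun γ h h0 => h (by simp [h0]) }
  map_add' x y := by ext; simp [mul_add]
  map_smul' a x := by ext; simp [mul_left_comm]

lemma diagOp_coeff (f : Γ → A) (x : HahnSeries Γ A) (γ : Γ) :
    (diagOp f x).coeff γ = f γ * x.coeff γ := rfl

lemma diagOp_mul (f f' : Γ → A) (h : ∀ a b, f (a + b) = f' a + f b) (x y : HahnSeries Γ A) :
    diagOp f (x * y) = diagOp f' x * y + x * diagOp f y := by
  ext γ
  rw [diagOp_coeff, HahnSeries.coeff_add, HahnSeries.coeff_mul,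
    HahnSeries.coeff_mul_left' (x := diagOp f' x) x.isPWO_support
      (fun γ h h0 => h (by simp [diagOp_coeff, h0])),
    HahnSeries.coeff_mul_right' (y := diagOp f y) y.isPWO_support
      (fun γ h h0 => h (by simp [diagOp_coeff, h0])), Finset.mul_sum, ← Finset.sum_add_distrib]
  refine Finset.sum_congr rfl fun ij hij => ?_
  rw [Finset.mem_antidiagonal] at hij
  rw [diagOp_coeff, diagOp_coeff, ← hij.2.2, h]
  ring

end

variable {N : ℕ}

/-- The exponent vector of a monomial. -/
def expo (m : Fin N →₀ ℕ) : Exps N := toLex fun i => (m i : ℤ)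

lemma expo_add (m m' : Fin N →₀ ℕ) : expo (m + m') = expo m + expo m' := by
  funext i
  exact Nat.cast_add _ _

lemma expo_inj : Function.Injective (expo (N := N)) := by
  intro m m' h
  ext i
  exact Nat.cast_injective (R := ℤ) (congrFun h i)

/-- Polynomials as Hahn series. -/
def polyH : MvPolynomial (Fin N) ℂ →+* HahnSeries (Exps N) ℂ :=
  MvPolynomial.eval₂Hom HahnSeries.C fun i => HahnSeries.single (expo (Finsupp.single i 1)) 1

lemma polyH_monomial (m : Fin N →₀ ℕ) (c : ℂ) :
    polyH (MvPolynomial.monomial m c) = HahnSeries.single (expo m) c := by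
  induction m using Finsupp.induction_linear generalizing c with
  | zero =>
    rw [MvPolynomial.monomial_zero', polyH, MvPolynomial.eval₂Hom_C]
    rfl
  | add m m' h h' =>
    have : MvPolynomial.monomial (m + m') c
        = MvPolynomial.monomial m c * MvPolynomial.monomial m' 1 := by
      rw [MvPolynomial.monomial_mul, mul_one]
    rw [this, map_mul, h, h', HahnSeries.single_mul_single, mul_one, expo_add]
  | single i k =>
    induction k generalizing c with
    | zero =>
      rw [Finsupp.single_zero, MvPolynomial.monomial_zero', polyH, MvPolynomial.eval₂Hom_C]
      rfl
    | succ k ih =>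
      have : MvPolynomial.monomial (Finsupp.single i (k + 1)) c
          = MvPolynomial.monomial (Finsupp.single i k) c * MvPolynomial.X i := by
        rw [MvPolynomial.X, MvPolynomial.monomial_mul, mul_one, Finsupp.single_add]
      rw [this, map_mul, ih, Finsupp.single_add, expo_add]
      simp only [polyH, MvPolynomial.coe_eval₂Hom, MvPolynomial.eval₂_X]
      rw [HahnSeries.single_mul_single, mul_one]

lemma polyH_sum (p : MvPolynomial (Fin N) ℂ) :
    polyH p = ∑ m ∈ p.support, HahnSeries.single (expo m) (p.coeff m) := by
  conv_lhs => rw [p.as_sum, map_sum]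
  exact Finset.sum_congr rfl fun m _ => polyH_monomial m _

lemma polyH_coeff (p : MvPolynomial (Fin N) ℂ) (m : Fin N →₀ ℕ) :
    (polyH p).coeff (expo m) = p.coeff m := by
  rw [polyH_sum, HahnSeries.coeff_sum]
  simp only [HahnSeries.coeff_single, expo_inj.eq_iff, Finset.sum_ite_eq]
  split_ifs with h
  · rfl
  · exact (MvPolynomial.notMem_support_iff.mp h).symm

lemma polyH_inj : Function.Injective (polyH (N := N)) := by
  intro p q h
  ext m
  rw [← polyH_coeff, h, polyH_coeff]

variable {F : Type*} [Field F] [Algebra ℂ F] [Algebra (MvPolynomial (Fin N) ℂ) F]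
  [IsScalarTower ℂ (MvPolynomial (Fin N) ℂ) F] [IsFractionRing (MvPolynomial (Fin N) ℂ) F]

variable (F) in
/-- The expansion of rational functions as Hahn series, i.e. in the region
`|x_1| ≪ |x_2| ≪ …`. -/
def embH : F →+* HahnSeries (Exps N) ℂ := IsFractionRing.lift (polyH_inj (N := N))

lemma embH_poly (p : MvPolynomial (Fin N) ℂ) :
    embH F (algebraMap _ F p) = polyH p := IsFractionRing.lift_algebraMap _ _

/-- Hahn series with coefficients in `ℂ[λ_1,…,λ_N]`; such a series `f` stands for the formal
expression `x^λ f(x, λ)`. -/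
abbrev WW (N : ℕ) : Type := HahnSeries (Exps N) (MvPolynomial (Fin N) ℂ)

variable (F) in
/-- Rational functions as Hahn series with coefficients constant in `λ`. -/
def embW : F →+* WW N := (mapH MvPolynomial.C).comp (embH F)

/-- The ring of `ℂ[λ]`-linear operators on `WW N`. -/
def OpW (N : ℕ) : Type := Module.End (MvPolynomial (Fin N) ℂ) (WW N)

instance : Ring (OpW N) := inferInstanceAs (Ring (Module.End (MvPolynomial (Fin N) ℂ) (WW N)))
instance : FunLike (OpW N) (WW N) (WW N) :=
  inferInstanceAs (FunLike (WW N →ₗ[MvPolynomial (Fin N) ℂ] WW N) (WW N) (WW N))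
instance : LinearMapClass (OpW N) (MvPolynomial (Fin N) ℂ) (WW N) (WW N) :=
  inferInstanceAs (LinearMapClass (WW N →ₗ[MvPolynomial (Fin N) ℂ] WW N)
    (MvPolynomial (Fin N) ℂ) (WW N) (WW N))

lemma OpW.add_apply (A B : OpW N) (u : WW N) : (A + B) u = A u + B u := rfl
lemma OpW.neg_apply (A : OpW N) (u : WW N) : (-A) u = -A u := rfl
lemma OpW.sub_apply (A B : OpW N) (u : WW N) : (A - B) u = A u - B u := rfl
lemma OpW.mul_apply (A B : OpW N) (u : WW N) : (A * B) u = A (B u) := rfl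
lemma OpW.zero_apply (u : WW N) : (0 : OpW N) u = 0 := rfl
lemma OpW.one_apply (u : WW N) : (1 : OpW N) u = u := rfl
lemma OpW.sum_apply {κ : Type*} (s : Finset κ) (A : κ → OpW N) (u : WW N) :
    (∑ i ∈ s, A i) u = ∑ i ∈ s, A i u :=
  LinearMap.sum_apply (M := WW N) (M₂ := WW N) (R := MvPolynomial (Fin N) ℂ) s A u
lemma OpW.ext {A B : OpW N} (h : ∀ u, A u = B u) : A = B := LinearMap.ext h

/-- The operator `x_i ∂/∂x_i` on expressions `x^λ f(x, λ)`. -/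
def dW (i : Fin N) : OpW N :=
  diagOp fun γ => MvPolynomial.X i + MvPolynomial.C ((γ i : ℤ) : ℂ)

lemma dW_coeff (i : Fin N) (u : WW N) (γ : Exps N) :
    (dW i u).coeff γ = (MvPolynomial.X i + MvPolynomial.C ((γ i : ℤ) : ℂ)) * u.coeff γ := rfl

variable (F) in
/-- Rational functions as multiplication operators on `WW N`. -/
def mulW : F →+* OpW N :=
  (Algebra.lmul (MvPolynomial (Fin N) ℂ) (WW N)).toRingHom.comp (embW F)

lemma mulW_apply (f : F) (u : WW N) : mulW F f u = embW F f * u := rfl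

/-- Two derivations along `φ` from a field of rational functions agree if they agree on constants
and coordinates. -/
lemma der_ext {K : Type*} [Field K] (φ : F →+* K) (D D' : F →+ K)
    (hD : ∀ f g, D (f * g) = φ f * D g + D f * φ g)
    (hD' : ∀ f g, D' (f * g) = φ f * D' g + D' f * φ g)
    (hC : ∀ c : ℂ, D (algebraMap ℂ F c) = D' (algebraMap ℂ F c))
    (hX : ∀ i : Fin N, D (algebraMap (MvPolynomial (Fin N) ℂ) F (MvPolynomial.X i))
      = D' (algebraMap (MvPolynomial (Fin N) ℂ) F (MvPolynomial.X i))) (f : F) : D f = D' f := by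
  have hp : ∀ p : MvPolynomial (Fin N) ℂ, D (algebraMap _ F p) = D' (algebraMap _ F p) := by
    intro p
    induction p using MvPolynomial.induction_on with
    | C c =>
      rw [← MvPolynomial.algebraMap_eq, ← IsScalarTower.algebraMap_apply]
      exact hC c
    | add p q h h' => rw [map_add, map_add, map_add, h, h']
    | mul_X p i h => rw [map_mul, hD, hD', h, hX]
  obtain ⟨p, q, hq, rfl⟩ := IsFractionRing.div_surjective (A := MvPolynomial (Fin N) ℂ) f
  have hq0 : algebraMap (MvPolynomial (Fin N) ℂ) F q ≠ 0 :=
    IsFractionRing.to_map_ne_zero_of_mem_nonZeroDivisors hq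
  have e := hp p
  rw [← div_mul_cancel₀ (algebraMap _ F p) hq0, hD, hD', hp q] at e
  exact mul_right_cancel₀ ((map_ne_zero φ).mpr hq0) (add_left_cancel e)

/-! ### Shift-equivariant operators -/

/-- The substitution `λ ↦ λ + μ`. -/
def tau (μ : Exps N) : MvPolynomial (Fin N) ℂ →+* MvPolynomial (Fin N) ℂ :=
  MvPolynomial.eval₂Hom MvPolynomial.C
    fun i => MvPolynomial.X i + MvPolynomial.C ((μ i : ℤ) : ℂ)

lemma tau_C (μ : Exps N) (c : ℂ) : tau μ (MvPolynomial.C c) = MvPolynomial.C c := by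
  simp [tau]

lemma tau_X (μ : Exps N) (i : Fin N) : tau μ (MvPolynomial.X i)
    = MvPolynomial.X i + MvPolynomial.C ((μ i : ℤ) : ℂ) := by
  simp [tau]

/-- Rewriting `x^λ f(x, λ)` with `λ` replaced by `λ + μ`: multiplication by `x^μ` composed with the
shift `λ ↦ λ + μ`. -/
def shiftW (μ : Exps N) (u : WW N) : WW N := HahnSeries.single μ 1 * mapH (tau μ) u

lemma shiftW_coeff (μ γ : Exps N) (u : WW N) :
    (shiftW μ u).coeff γ = tau μ (u.coeff (γ - μ)) := by
  rw [shiftW, HahnSeries.coeff_single_mul, one_mul, mapH_coeff]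

lemma embW_coeff (f : F) (γ : Exps N) :
    (embW F f).coeff γ = MvPolynomial.C ((embH F f).coeff γ) := rfl

/-- The operators commuting with all `shiftW μ`. -/
def equivar (N : ℕ) : Subring (OpW N) where
  carrier := {A | ∀ μ u, A (shiftW μ u) = shiftW μ (A u)}
  mul_mem' {A B} hA hB μ u := by
    change A (B _) = shiftW μ (A (B u))
    rw [hB, hA]
  one_mem' μ u := rfl
  add_mem' {A B} hA hB μ u := by
    change A _ + B _ = shiftW μ (A u + B u)
    rw [hA, hB, shiftW, shiftW, shiftW, map_add, mul_add]
  zero_mem' μ u := by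
    change 0 = shiftW μ 0
    simp [shiftW]
  neg_mem' {A} hA μ u := by
    change -A _ = shiftW μ (-A u)
    rw [hA, shiftW, shiftW, map_neg, mul_neg]

lemma equivar_mul (f : F) : mulW F f ∈ equivar N := by
  intro μ u
  have : mapH (tau μ) (embW F f) = embW F f := by
    ext1
    funext γ
    rw [mapH_coeff, embW_coeff, tau_C]
  simp only [mulW_apply, shiftW, map_mul, this]
  ring

lemma equivar_d (i : Fin N) : dW i ∈ equivar N := by
  intro μ u
  ext1
  funext γ
  rw [shiftW_coeff, dW_coeff, dW_coeff, shiftW_coeff, map_mul, map_add, tau_X, tau_C]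
  have : (((γ - μ) i : ℤ) : ℂ) = ((γ i : ℤ) : ℂ) - ((μ i : ℤ) : ℂ) := by
    rw [← Int.cast_sub]; rfl
  rw [this, MvPolynomial.C_sub]
  ring

/-! ### Constant terms -/

/-- `A` has constant term `h`: it is triangular for the exponent filtration, and on the leading
coefficient of exponent `γ` it acts as multiplication by `h(λ + γ)`. -/
def HasSymbol (A : OpW N) (h : MvPolynomial (Fin N) ℂ) :
    Prop :=
  ∀ (γ : Exps N) (u : WW N), (∀ μ < γ, u.coeff μ = 0) →
    (∀ μ < γ, (A u).coeff μ = 0) ∧ (A u).coeff γ = tau γ h * u.coeff γ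

section symbol
variable {A B : OpW N} {h h' : MvPolynomial (Fin N) ℂ}

lemma HasSymbol.add (hA : HasSymbol A h) (hB : HasSymbol B h') : HasSymbol (A + B) (h + h') := by
  intro γ u hu
  obtain ⟨a1, a2⟩ := hA γ u hu
  obtain ⟨b1, b2⟩ := hB γ u hu
  refine ⟨fun μ hμ => ?_, ?_⟩
  · rw [OpW.add_apply, HahnSeries.coeff_add, a1 μ hμ, b1 μ hμ, add_zero]
  · rw [OpW.add_apply, HahnSeries.coeff_add, a2, b2, map_add, add_mul]

lemma HasSymbol.neg (hA : HasSymbol A h) : HasSymbol (-A) (-h) := by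
  intro γ u hu
  obtain ⟨a1, a2⟩ := hA γ u hu
  refine ⟨fun μ hμ => ?_, ?_⟩
  · rw [OpW.neg_apply, HahnSeries.coeff_neg, a1 μ hμ, neg_zero]
  · rw [OpW.neg_apply, HahnSeries.coeff_neg, a2, map_neg, neg_mul]

lemma HasSymbol.sub (hA : HasSymbol A h) (hB : HasSymbol B h') : HasSymbol (A - B) (h - h') := by
  rw [sub_eq_add_neg, sub_eq_add_neg]
  exact hA.add hB.neg

lemma HasSymbol.mul (hA : HasSymbol A h) (hB : HasSymbol B h') : HasSymbol (A * B) (h * h') := by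
  intro γ u hu
  obtain ⟨b1, b2⟩ := hB γ u hu
  obtain ⟨a1, a2⟩ := hA γ (B u) b1
  exact ⟨a1, by rw [OpW.mul_apply, a2, b2, map_mul, mul_assoc]⟩

lemma HasSymbol.zero : HasSymbol (0 : OpW N) 0 :=
  fun γ u hu => ⟨fun _ _ => rfl, by simp [OpW.zero_apply]⟩

lemma HasSymbol.one : HasSymbol (1 : OpW N) 1 :=
  fun γ u hu => ⟨hu, by simp [OpW.one_apply]⟩

lemma HasSymbol.sum {κ : Type*} (s : Finset κ)
    {A : κ → OpW N} {h : κ → MvPolynomial (Fin N) ℂ}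
    (hA : ∀ i, HasSymbol (A i) (h i)) : HasSymbol (∑ i ∈ s, A i) (∑ i ∈ s, h i) := by
  classical
  induction s using Finset.induction_on with
  | empty => simpa using HasSymbol.zero
  | insert a s ha ih =>
    rw [Finset.sum_insert ha, Finset.sum_insert ha]
    exact (hA a).add ih

end symbol

/-- The operators having a constant term. -/
def symbolic (N : ℕ) : Subring (OpW N) where
  carrier := {A | ∃ h, HasSymbol A h}
  mul_mem' := fun ⟨_, h⟩ ⟨_, h'⟩ => ⟨_, h.mul h'⟩
  one_mem' := ⟨_, HasSymbol.one⟩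
  add_mem' := fun ⟨_, h⟩ ⟨_, h'⟩ => ⟨_, h.add h'⟩
  zero_mem' := ⟨_, HasSymbol.zero⟩
  neg_mem' := fun ⟨_, h⟩ => ⟨_, h.neg⟩

lemma hasSymbol_d (i : Fin N) : HasSymbol (dW i) (MvPolynomial.X i) := by
  intro γ u hu
  refine ⟨fun μ hμ => ?_, ?_⟩
  · rw [dW_coeff, hu μ hμ, mul_zero]
  · rw [dW_coeff, tau_X]

variable (N) in
/-- The rational function `f` tends to `c` in the region of expansion. -/
def HasLim (f : F) (c : ℂ) : Prop :=
  0 < (embH F f - HahnSeries.C c : HahnSeries (Exps N) ℂ).orderTop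

lemma lt_add_top {a b : WithTop (Exps N)} {γ : Exps N} (ha : 0 < a) (hb : (γ : WithTop _) ≤ b) :
    (γ : WithTop _) < a + b := by
  induction a using WithTop.recTopCoe with
  | top => simp
  | coe a =>
    induction b using WithTop.recTopCoe with
    | top => simp
    | coe b =>
      norm_cast at *
      exact lt_add_of_pos_of_le ha hb

lemma le_orderTop_iff {A : Type*} [Zero A] (γ : Exps N) (u : HahnSeries (Exps N) A) :
    (γ : WithTop _) ≤ u.orderTop ↔ ∀ μ < γ, u.coeff μ = 0 := by
  rw [HahnSeries.le_orderTop_iff_forall]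
  exact forall_congr' fun μ => imp_congr WithTop.coe_lt_coe Iff.rfl

lemma HasLim.symbol {f : F} {c : ℂ} (h : HasLim N f c) :
    HasSymbol (mulW F f) (MvPolynomial.C c : MvPolynomial (Fin N) ℂ) := by
  intro γ u hu
  set v : WW N := mapH MvPolynomial.C (embH F f - HahnSeries.C c) with hv
  have h1 : 0 < v.orderTop := lt_of_lt_of_le h (orderTop_le_mapH _ _)
  have h2 : mulW F f u = MvPolynomial.C (σ := Fin N) c • u + v * u := by
    have : embW F f = HahnSeries.C (MvPolynomial.C (σ := Fin N) c) + v := by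
      rw [hv, map_sub, embW, RingHom.comp_apply, HahnSeries.C_apply, HahnSeries.C_apply, mapH_single]
      abel
    rw [mulW_apply, this, add_mul, HahnSeries.C_mul_eq_smul]
  have h3 : (γ : WithTop _) < (v * u).orderTop :=
    lt_of_lt_of_le (lt_add_top h1 ((le_orderTop_iff γ u).mpr hu)) HahnSeries.orderTop_add_le_mul
  rw [h2]
  refine ⟨fun μ hμ => ?_, ?_⟩
  · rw [HahnSeries.coeff_add, HahnSeries.coeff_smul, hu μ hμ, smul_zero, zero_add]
    exact HahnSeries.coeff_eq_zero_of_lt_orderTop (lt_trans (WithTop.coe_lt_coe.mpr hμ) h3)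
  · rw [HahnSeries.coeff_add, HahnSeries.coeff_eq_zero_of_lt_orderTop h3, add_zero,
      HahnSeries.coeff_smul, tau_C, smul_eq_mul]

/-! ### Differential operators -/

/-- Differential operators of order `< n` on `WW N` in the sense of Grothendieck, relative to
multiplication by rational functions. -/
def IsDO (F : Type*) [Field F] [Algebra ℂ F] [Algebra (MvPolynomial (Fin N) ℂ) F]
    [IsScalarTower ℂ (MvPolynomial (Fin N) ℂ) F] [IsFractionRing (MvPolynomial (Fin N) ℂ) F] :
    ℕ → OpW N → Prop
  | 0, A => A = 0
  | n + 1, A => ∀ f : F, IsDO F n (A * mulW F f - mulW F f * A)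

section DO
variable {A B : OpW N}

lemma IsDO.zero (n : ℕ) : IsDO F n (0 : OpW N) := by
  induction n with
  | zero => rfl
  | succ n ih => intro f; simpa using ih

lemma IsDO.succ {n : ℕ} (h : IsDO F n A) : IsDO F (n + 1) A := by
  induction n generalizing A with
  | zero =>
    rw [show A = 0 from h]
    exact IsDO.zero _
  | succ n ih => exact fun f => ih (h f)

lemma IsDO.mono {n n' : ℕ} (hn : n ≤ n') (h : IsDO F n A) : IsDO F n' A := by
  induction hn with
  | refl => exact h
  | step _ ih => exact ih.succ

lemma IsDO.add {n : ℕ} (hA : IsDO F n A) (hB : IsDO F n B) : IsDO F n (A + B) := by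
  induction n generalizing A B with
  | zero =>
    rw [show A = 0 from hA, show B = 0 from hB, add_zero]
    exact IsDO.zero _
  | succ n ih =>
    intro f
    have := ih (hA f) (hB f)
    convert this using 1
    noncomm_ring

lemma IsDO.neg {n : ℕ} (hA : IsDO F n A) : IsDO F n (-A) := by
  induction n generalizing A with
  | zero =>
    rw [show A = 0 from hA, neg_zero]
    exact IsDO.zero _
  | succ n ih =>
    intro f
    have := ih (hA f)
    convert this using 1
    noncomm_ring

lemma IsDO.mul {n n' : ℕ} (hA : IsDO F n A) (hB : IsDO F n' B) : IsDO F (n + n') (A * B) := by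
  induction n generalizing A B n' with
  | zero =>
    rw [show A = 0 from hA, zero_mul]
    exact IsDO.zero _
  | succ n ihn =>
    induction n' generalizing A B with
    | zero =>
      rw [show B = 0 from hB, mul_zero]
      exact IsDO.zero _
    | succ n' ih =>
      change ∀ f, IsDO F (n + 1 + n') _
      intro f
      have h1 := ih hA (hB f)
      have h2 := ihn (hA f) hB
      have h3 := h1.add (h2.mono (show n + (n' + 1) ≤ n + 1 + n' by omega))
      have h4 : A * B * mulW F f - mulW F f * (A * B) = A * (B * mulW F f - mulW F f * B)
        + (A * mulW F f - mulW F f * A) * B := by noncomm_ring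
      rw [h4]
      exact h3

variable (F N) in
/-- The ring of differential operators on `WW N`. -/
def diffOps : Subring (OpW N) where
  carrier := {A : OpW N | ∃ n, IsDO F n A}
  mul_mem' := fun ⟨_, h⟩ ⟨_, h'⟩ => ⟨_, h.mul h'⟩
  one_mem' := ⟨1, fun (f : F) => by rw [one_mul, mul_one, sub_self]; exact IsDO.zero 0⟩
  add_mem' := fun ⟨_, h⟩ ⟨_, h'⟩ =>
    ⟨_, (h.mono (le_max_left _ _)).add (h'.mono (le_max_right _ _))⟩
  zero_mem' := ⟨0, IsDO.zero 0⟩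
  neg_mem' := fun ⟨_, h⟩ => ⟨_, h.neg⟩

lemma isDO_mul (f : F) : IsDO (N := N) F 1 (mulW F f) := by
  intro f'
  rw [← map_mul, ← map_mul, mul_comm, sub_self]
  rfl

end DO

end Hahn

/-! ### Expansion of the deformed CMS integrals -/

section Expand

variable {N : ℕ}
variable {F : Type*} [Field F] [Algebra ℂ F] [Algebra (MvPolynomial (Fin N) ℂ) F]
  [IsScalarTower ℂ (MvPolynomial (Fin N) ℂ) F] [IsFractionRing (MvPolynomial (Fin N) ℂ) F]

lemma le_orderTop_sum {A κ : Type*} [AddCommGroup A] (s : Finset κ)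
    (f : κ → HahnSeries (Exps N) A) (a : WithTop (Exps N)) (h : ∀ i ∈ s, a ≤ (f i).orderTop) :
    a ≤ (∑ i ∈ s, f i).orderTop := by
  classical
  refine Finset.sum_induction f (fun u => a ≤ u.orderTop) (fun u v hu hv => ?_) (by simp) h
  exact le_trans (le_min hu hv) HahnSeries.min_orderTop_le_orderTop_add

lemma embH_const (c : ℂ) : embH F (algebraMap ℂ F c) = (HahnSeries.C c : HahnSeries (Exps N) ℂ) := by
  rw [IsScalarTower.algebraMap_apply ℂ (MvPolynomial (Fin N) ℂ) F, embH_poly,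
    MvPolynomial.algebraMap_eq, polyH, MvPolynomial.eval₂Hom_C]

lemma embW_const (c : ℂ) :
    embW F (algebraMap ℂ F c) = (HahnSeries.C (MvPolynomial.C c) : WW N) := by
  rw [embW, RingHom.comp_apply, embH_const, HahnSeries.C_apply, mapH_single, HahnSeries.C_apply]

lemma embH_X (i : Fin N) : embH F (algebraMap _ F (MvPolynomial.X i : MvPolynomial (Fin N) ℂ))
    = HahnSeries.single (expo (Finsupp.single i 1)) 1 := by
  rw [embH_poly, MvPolynomial.X, polyH_monomial]

lemma expo_lt {i j : Fin N} (h : i < j) :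
    expo (Finsupp.single j 1) < expo (Finsupp.single i 1) := by
  refine ⟨i, fun l hl => ?_, ?_⟩
  · simp [expo, Finsupp.single_apply, hl.ne', (hl.trans h).ne']
  · simp [expo, Finsupp.single_apply, h.ne']

lemma HasLim.const (c : ℂ) : HasLim N (algebraMap ℂ F c) c := by
  rw [HasLim, embH_const, sub_self]
  simp

lemma HasLim.add {f g : F} {c d : ℂ} (hf : HasLim N f c) (hg : HasLim N g d) :
    HasLim N (f + g) (c + d) := by
  rw [HasLim, map_add, map_add, add_sub_add_comm]
  exact lt_of_lt_of_le (lt_min hf hg) HahnSeries.min_orderTop_le_orderTop_add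

lemma HasLim.sub {f g : F} {c d : ℂ} (hf : HasLim N f c) (hg : HasLim N g d) :
    HasLim N (f - g) (c - d) := by
  rw [HasLim, map_sub, map_sub, sub_sub_sub_comm]
  exact lt_of_lt_of_le (lt_min hf hg) HahnSeries.min_orderTop_le_orderTop_sub

lemma HasLim.sum {κ : Type*} (s : Finset κ) {f : κ → F} {c : κ → ℂ} (h : ∀ i, HasLim N (f i) (c i)) :
    HasLim N (∑ i ∈ s, f i) (∑ i ∈ s, c i) := by
  classical
  induction s using Finset.induction_on with
  | empty => simpa using HasLim.const (N := N) (F := F) 0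
  | insert a s ha ih =>
    rw [Finset.sum_insert ha, Finset.sum_insert ha]
    exact (h a).add ih

lemma HasLim.const_mul {f : F} {c : ℂ} (h : HasLim N f c) (b : ℂ) :
    HasLim N (algebraMap ℂ F b * f) (b * c) := by
  rw [HasLim, map_mul, map_mul, embH_const, ← mul_sub, HahnSeries.C_mul_eq_smul]
  refine lt_of_lt_of_le h (HahnSeries.le_orderTop_iff_forall.mpr fun γ hγ => ?_)
  rw [HahnSeries.coeff_smul, HahnSeries.coeff_eq_zero_of_lt_orderTop hγ, smul_zero]

/-- In the region of expansion, `x_i/(x_i - x_j)` tends to `0` for `i < j`. -/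
lemma hasLim_r {i j : Fin N} (h : i < j) :
    HasLim N (algebraMap _ F (MvPolynomial.X i : MvPolynomial (Fin N) ℂ) /
      (algebraMap _ F (MvPolynomial.X i : MvPolynomial (Fin N) ℂ)
        - algebraMap _ F (MvPolynomial.X j : MvPolynomial (Fin N) ℂ))) 0 := by
  set a := algebraMap _ F (MvPolynomial.X i : MvPolynomial (Fin N) ℂ) with ha
  set b := algebraMap _ F (MvPolynomial.X j : MvPolynomial (Fin N) ℂ) with hb
  have oa : (embH F a : HahnSeries (Exps N) ℂ).orderTop = expo (Finsupp.single i 1) := by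
    rw [ha, embH_X, HahnSeries.orderTop_single one_ne_zero]
  have ob : (embH F b : HahnSeries (Exps N) ℂ).orderTop = expo (Finsupp.single j 1) := by
    rw [hb, embH_X, HahnSeries.orderTop_single one_ne_zero]
  have hlt := WithTop.coe_lt_coe.mpr (expo_lt h)
  have oab : (embH F (a - b) : HahnSeries (Exps N) ℂ).orderTop = expo (Finsupp.single j 1) := by
    rw [map_sub, ← neg_sub, HahnSeries.orderTop_neg, HahnSeries.orderTop_sub (by rw [oa, ob]; exact hlt), ob]
  have hne : a - b ≠ 0 := by
    intro h0
    rw [h0, map_zero, HahnSeries.orderTop_zero] at oab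
    exact WithTop.top_ne_coe oab
  have e : (embH F (a / (a - b)) : HahnSeries (Exps N) ℂ).orderTop
      + expo (Finsupp.single j 1) = expo (Finsupp.single i 1) := by
    rw [← oab, ← HahnSeries.orderTop_mul, ← map_mul, div_mul_cancel₀ _ hne, oa]
  rw [HasLim, map_zero, sub_zero]
  by_contra h0
  have := add_le_add_left (not_lt.mp h0) ((expo (Finsupp.single j 1) : Exps N) : WithTop (Exps N))
  rw [e, zero_add] at this
  exact absurd this (not_le.mpr hlt)

variable {D : Type*} [Ring D]

/-- `L_p` lies in every subring containing the functions `r_ij`, the constants and the Euler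
derivations. -/
lemma CMS.Lop_mem {ι : Type*} [Fintype ι] [DecidableEq ι] (S : CMS ι F) {φ : F →+* D} {d : ι → D}
    (A : Subring D) (h1 : ∀ z : ℂ, φ (algebraMap ℂ F z) ∈ A) (h2 : ∀ i j, φ (S.r i j) ∈ A)
    (h3 : ∀ i, d i ∈ A) (p : ℕ) : S.Lop φ d p ∈ A := by
  have hv : ∀ i, S.vec φ d p i ∈ A := by
    induction p with
    | zero => exact fun i => A.one_mem
    | succ p ih =>
      intro i
      refine A.sub_mem (A.mul_mem (A.mul_mem (h1 _) (h3 i)) (ih i)) (A.sum_mem fun j _ => ?_)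
      rw [map_mul]
      exact A.mul_mem (A.mul_mem (h1 _) (h2 i j)) (A.sub_mem (ih i) (ih j))
  refine A.sum_mem fun i _ => A.mul_mem ?_ (hv i)
  rw [CMS.cF, ← map_inv₀]
  exact h1 _

/-- Formation of `L_p` is compatible with ring homomorphisms. -/
lemma CMS.map_Lop {ι D' : Type*} [Fintype ι] [DecidableEq ι] [Ring D'] (S : CMS ι F)
    {φ : F →+* D} {d : ι → D} (ψ : D →+* D') (p : ℕ) :
    ψ (S.Lop φ d p) = S.Lop (ψ.comp φ) (fun i => ψ (d i)) p := by
  have hv : ∀ i, ψ (S.vec φ d p i) = S.vec (ψ.comp φ) (fun i => ψ (d i)) p i := by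
    induction p with
    | zero => exact fun i => map_one ψ
    | succ p ih => intro i; simp [CMS.vec, ih]
  simp [CMS.Lop, hv]

variable (S : CMS (Fin N) F)
  (hS : ∀ i, S.x i = algebraMap _ F (MvPolynomial.X i : MvPolynomial (Fin N) ℂ))
include hS

lemma CMS.r_lim (i j : Fin N) : ∃ c, HasLim N (S.r i j) c := by
  rcases lt_trichotomy i j with h | h | h
  · refine ⟨0, ?_⟩
    rw [CMS.r, rr, hS, hS]
    exact hasLim_r h
  · subst h
    refine ⟨0, ?_⟩
    rw [CMS.r_self, ← map_zero (algebraMap ℂ F)]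
    exact HasLim.const 0
  · refine ⟨1 - 0, ?_⟩
    have e : S.r i j = algebraMap ℂ F 1 - S.r j i := by
      have := rr_add S.hx h.ne'
      rw [map_one]
      exact eq_sub_of_add_eq this
    rw [e]
    refine (HasLim.const 1).sub ?_
    rw [CMS.r, rr, hS, hS]
    exact hasLim_r h

lemma CMS.B_lim (i : Fin N) : ∃ c, HasLim N (S.B i) c := by
  choose c hc using fun j => S.r_lim hS i j
  have e : S.B i = algebraMap ℂ F 2 * S.G i + S.gF i - ∑ j, S.gF j := by
    rw [CMS.B, map_ofNat]
  rw [e]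
  exact ⟨_, (((HasLim.sum _ fun j => (hc j).const_mul _).const_mul 2).add (HasLim.const _)).sub
    (HasLim.sum _ fun j => HasLim.const _)⟩

/-- Euler derivations multiply the coefficient at an exponent `γ` by `γ_i`. -/
lemma CMS.embH_der (i : Fin N) (f : F) (γ : Exps N) :
    (embH F (S.δ i f)).coeff γ = ((γ i : ℤ) : ℂ) * (embH F f).coeff γ := by
  have key := der_ext (N := N) (F := F) (embH F)
    ((embH F).toAddMonoidHom.comp (S.δ i : F →ₗ[ℂ] F).toAddMonoidHom)
    ((diagOp fun γ : Exps N => ((γ i : ℤ) : ℂ)).toAddMonoidHom.comp (embH F).toAddMonoidHom)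
    (fun f g => ?_) (fun f g => ?_) (fun c => ?_) (fun j => ?_) f
  · have := congrArg (fun u : HahnSeries (Exps N) ℂ => u.coeff γ) key
    exact this
  · change embH F (S.δ i (f * g)) = embH F f * embH F (S.δ i g) + embH F (S.δ i f) * embH F g
    rw [Derivation.leibniz, map_add, smul_eq_mul, smul_eq_mul, map_mul, map_mul,
      mul_comm (embH F g)]
  · change diagOp _ (embH F (f * g)) = embH F f * diagOp _ (embH F g)
      + diagOp _ (embH F f) * embH F g
    rw [map_mul, diagOp_mul _ (fun γ : Exps N => ((γ i : ℤ) : ℂ)), add_comm]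
    intro a b
    rw [← Int.cast_add]
    rfl
  · change embH F (S.δ i (algebraMap ℂ F c)) = diagOp _ (embH F (algebraMap ℂ F c))
    rw [Derivation.map_algebraMap, map_zero, embH_const]
    ext γ
    rw [diagOp_coeff, HahnSeries.C_apply, HahnSeries.coeff_single, HahnSeries.coeff_zero]
    split_ifs with h
    · subst h
      rw [show ((0 : Exps N) i : ℤ) = 0 from rfl, Int.cast_zero, zero_mul]
    · simp
  · change embH F (S.δ i _) = diagOp _ (embH F _)
    rw [← hS, S.hδ, hS, apply_ite (embH F), embH_X, map_zero]
    ext γ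
    rw [diagOp_coeff]
    by_cases h : γ = expo (Finsupp.single j 1)
    · subst h
      split_ifs with h2
      · subst h2; simp [expo]
      · simp [expo, Finsupp.single_apply, h2]
    · split_ifs <;> simp [HahnSeries.coeff_single_of_ne h]

omit hS in
lemma dW_mul (i : Fin N) (v u : WW N) : dW i (v * u)
    = diagOp (fun γ : Exps N => MvPolynomial.C ((γ i : ℤ) : ℂ)) v * u + v * dW i u := by
  refine diagOp_mul (fun γ : Exps N => MvPolynomial.X i + MvPolynomial.C ((γ i : ℤ) : ℂ))
    (fun γ : Exps N => MvPolynomial.C ((γ i : ℤ) : ℂ)) (fun a b => ?_) v u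
  have : (((a + b) i : ℤ) : ℂ) = ((a i : ℤ) : ℂ) + ((b i : ℤ) : ℂ) := by
    rw [← Int.cast_add]; rfl
  simp only [this, map_add]
  ring

lemma CMS.embW_der (i : Fin N) (f : F) : embW F (S.δ i f)
    = diagOp (fun γ : Exps N => MvPolynomial.C ((γ i : ℤ) : ℂ)) (embW F f) := by
  ext1
  funext γ
  rw [embW_coeff, diagOp_coeff, embW_coeff, S.embH_der hS, map_mul]

lemma CMS.rep_fun (i : Fin N) (f : F) :
    (dW i * mulW F f : OpW N) = mulW F f * dW i + mulW F (S.δ i f) := by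
  refine OpW.ext fun u => ?_
  rw [OpW.add_apply, OpW.mul_apply, OpW.mul_apply, mulW_apply, mulW_apply, mulW_apply, dW_mul,
    S.embW_der hS, add_comm]

omit hS in
lemma dW_comm (i j : Fin N) : (dW i * dW j : OpW N) = dW j * dW i := by
  refine OpW.ext fun u => ?_
  rw [OpW.mul_apply, OpW.mul_apply]
  ext1
  funext γ
  rw [dW_coeff, dW_coeff, dW_coeff, dW_coeff, mul_left_comm]

lemma CMS.rep : S.Rep (mulW F) (dW (N := N)) := ⟨S.rep_fun hS, dW_comm⟩

lemma CMS.isDO_d (i : Fin N) : IsDO F 2 (dW i) := by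
  intro f
  rw [(S.rep hS).comm_fun, add_sub_cancel_left]
  exact isDO_mul _

lemma CMS.Lop_diffOps (p : ℕ) : S.Lop (mulW F) dW p ∈ diffOps N F := by
  have hm : ∀ f : F, mulW F f ∈ diffOps N F := fun f => ⟨1, isDO_mul f⟩
  exact S.Lop_mem _ (fun _ => hm _) (fun _ _ => hm _) (fun i => ⟨2, S.isDO_d hS i⟩) p

lemma CMS.Lop_symbolic (p : ℕ) : S.Lop (mulW F) dW p ∈ symbolic N := by
  have hm : ∀ f : F, (∃ c, HasLim N f c) → mulW F f ∈ symbolic N := fun f ⟨_, h⟩ => ⟨_, h.symbol⟩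
  exact S.Lop_mem _ (fun c => hm _ ⟨c, HasLim.const c⟩) (fun i j => hm _ (S.r_lim hS i j))
    (fun i => ⟨_, hasSymbol_d i⟩) p

omit hS in
lemma CMS.Lop_equivar (p : ℕ) : S.Lop (mulW F) dW p ∈ equivar N :=
  S.Lop_mem _ (fun _ => equivar_mul _) (fun _ _ => equivar_mul _) equivar_d p

end Expand

/-! ### Injectivity of the constant term -/

section Vanish

variable {N : ℕ}
variable {F : Type*} [Field F] [Algebra ℂ F] [Algebra (MvPolynomial (Fin N) ℂ) F]
  [IsScalarTower ℂ (MvPolynomial (Fin N) ℂ) F] [IsFractionRing (MvPolynomial (Fin N) ℂ) F]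

lemma smul_orderTop (c : MvPolynomial (Fin N) ℂ) (u : WW N) : u.orderTop ≤ (c • u).orderTop := by
  refine HahnSeries.le_orderTop_iff_forall.mpr fun γ hγ => ?_
  rw [HahnSeries.coeff_smul, HahnSeries.coeff_eq_zero_of_lt_orderTop hγ, smul_zero]

lemma embW_poly (Q : MvPolynomial (Fin N) ℂ) : embW F (algebraMap _ F Q)
    = ∑ m ∈ Q.support, MvPolynomial.C (σ := Fin N) (Q.coeff m) • HahnSeries.single (expo m) 1 := by
  rw [embW, RingHom.comp_apply, embH_poly, polyH_sum, map_sum]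
  refine Finset.sum_congr rfl fun m _ => ?_
  rw [mapH_single, ← HahnSeries.C_mul_eq_smul, HahnSeries.C_apply, HahnSeries.single_mul_single,
    zero_add, mul_one]

/-- A bound on the image of all monomials bounds the image of a polynomial times a monomial. -/
lemma poly_bound (A : OpW N) (ν : WithTop (Exps N))
    (h : ∀ μ : Exps N, ν + μ ≤ (A (HahnSeries.single μ 1)).orderTop) (Q : MvPolynomial (Fin N) ℂ)
    (μ : Exps N) : ν + (embW F (algebraMap _ F Q) : WW N).orderTop + μ
      ≤ (A (embW F (algebraMap _ F Q) * HahnSeries.single μ 1)).orderTop := by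
  have hQ : ∀ m ∈ Q.support, (embW F (algebraMap _ F Q) : WW N).orderTop ≤ expo m := by
    intro m hm
    refine HahnSeries.orderTop_le_of_coeff_ne_zero ?_
    rw [embW_coeff, embH_poly, polyH_coeff]
    exact fun h0 => MvPolynomial.mem_support_iff.mp hm (MvPolynomial.C_eq_zero.mp h0)
  rw [embW_poly (F := F) Q, Finset.sum_mul, map_sum, ← embW_poly (F := F) Q]
  refine le_orderTop_sum _ _ _ fun m hm => ?_
  rw [smul_mul_assoc, HahnSeries.single_mul_single, mul_one, map_smul]
  refine le_trans ?_ (le_trans (h _) (smul_orderTop _ _))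
  rw [WithTop.coe_add, ← add_assoc]
  exact add_le_add_left (add_le_add_right (hQ m hm) _) _

/-- A differential operator which raises the exponents of all monomials by at least `ν` raises the
exponents of all rational functions by at least `ν`. -/
lemma order_bound (n : ℕ) : ∀ (A : OpW N) (_ : IsDO F n A) (ν : WithTop (Exps N))
    (_ : ∀ μ : Exps N, ν + μ ≤ (A (HahnSeries.single μ 1)).orderTop) (f : F),
    ν + (embW F f : WW N).orderTop ≤ (A (embW F f)).orderTop := by
  induction n with
  | zero =>
    intro A hA ν h f
    rw [show A = 0 from hA, OpW.zero_apply, HahnSeries.orderTop_zero]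
    exact le_top
  | succ n ih =>
    intro A hA ν h f
    obtain ⟨P, Q, hQ, rfl⟩ := IsFractionRing.div_surjective (A := MvPolynomial (Fin N) ℂ) f
    have hQ0 : algebraMap (MvPolynomial (Fin N) ℂ) F Q ≠ 0 :=
      IsFractionRing.to_map_ne_zero_of_mem_nonZeroDivisors hQ
    set q := algebraMap (MvPolynomial (Fin N) ℂ) F Q with hq
    set f := algebraMap (MvPolynomial (Fin N) ℂ) F P / q with hf
    have hP : algebraMap (MvPolynomial (Fin N) ℂ) F P = q * f := by
      rw [hf, mul_div_cancel₀ _ hQ0]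
    have hqW : (embW F q : WW N) ≠ 0 := (map_ne_zero _).mpr hQ0
    -- the commutator of `A` with the denominator has lower order
    have h1 := ih _ (hA q) (ν + (embW F q : WW N).orderTop) (fun μ => by
      rw [OpW.sub_apply, OpW.mul_apply, OpW.mul_apply, mulW_apply, mulW_apply]
      refine le_trans (le_min (poly_bound A ν h Q μ) ?_) HahnSeries.min_orderTop_le_orderTop_sub
      refine le_trans ?_ HahnSeries.orderTop_add_le_mul
      rw [add_comm ν, add_assoc]
      exact add_le_add_right (h μ) _) f
    have h2 := poly_bound (F := F) A ν h P 0
    rw [HahnSeries.single_zero_one, mul_one, WithTop.coe_zero, add_zero, hP, map_mul,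
      HahnSeries.orderTop_mul, ← add_assoc] at h2
    rw [OpW.sub_apply, OpW.mul_apply, OpW.mul_apply, mulW_apply, mulW_apply] at h1
    have h3 := le_trans (le_min h2 h1) HahnSeries.min_orderTop_le_orderTop_sub
    rw [sub_sub_cancel, HahnSeries.orderTop_mul, add_comm ν, add_assoc] at h3
    exact WithTop.le_of_add_le_add_left (by simpa using hqW) h3

lemma shiftW_one (μ : Exps N) : shiftW μ (1 : WW N) = HahnSeries.single μ 1 := by
  rw [shiftW, (mapH (tau μ)).map_one, mul_one]

lemma equivar_bound {A : OpW N} (hA : A ∈ equivar N) (μ : Exps N) :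
    (A 1).orderTop + μ ≤ (A (HahnSeries.single μ 1)).orderTop := by
  rw [← shiftW_one, hA, shiftW, add_comm]
  refine le_trans ?_ HahnSeries.orderTop_add_le_mul
  rw [HahnSeries.orderTop_single one_ne_zero]
  exact add_le_add_right (orderTop_le_mapH _ _) _

/-- Polynomials `Σ_i (c_i λ_i² - b_i λ_i)` with all `c_i ≠ 0` are invariant under no shift. -/
lemma quad_shift (c b : Fin N → ℂ) (hc : ∀ i, c i ≠ 0) (ν : Exps N)
    (h : tau ν (∑ i, (MvPolynomial.C (c i) * MvPolynomial.X i * MvPolynomial.X i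
        - MvPolynomial.C (b i) * MvPolynomial.X i))
      = ∑ i, (MvPolynomial.C (c i) * MvPolynomial.X i * MvPolynomial.X i
        - MvPolynomial.C (b i) * MvPolynomial.X i)) : ν = 0 := by
  simp only [map_sum, map_sub, map_mul, tau_C, tau_X] at h
  have ev : ∀ v : Fin N → ℂ, ∑ i, (2 * c i * ν i) * v i + ∑ i, (c i * ν i ^ 2 - b i * ν i) = 0 := by
    intro v
    have := congrArg (MvPolynomial.eval v) h
    simp only [map_sum, map_sub, map_mul, map_add, MvPolynomial.eval_C, MvPolynomial.eval_X] at this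
    rw [← sub_eq_zero, ← Finset.sum_sub_distrib] at this
    rw [← Finset.sum_add_distrib, ← this]
    exact Finset.sum_congr rfl fun i _ => by ring
  funext l
  have h0 := ev 0
  have h1 := ev (Pi.single l 1)
  simp only [Pi.zero_apply, mul_zero, Finset.sum_const_zero, zero_add] at h0
  rw [h0, add_zero] at h1
  simp only [Pi.single_apply, mul_ite, mul_one, mul_zero, Finset.sum_ite_eq', Finset.mem_univ,
    if_true] at h1
  have h2 : ν l = 0 := by simpa [hc l] using h1
  exact h2

variable (S : CMS (Fin N) F)
  (hS : ∀ i, S.x i = algebraMap _ F (MvPolynomial.X i : MvPolynomial (Fin N) ℂ))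

lemma dW_one (i : Fin N) : dW i (1 : WW N) = (MvPolynomial.X i : MvPolynomial (Fin N) ℂ) • 1 := by
  ext1
  funext γ
  rw [dW_coeff, HahnSeries.coeff_smul, smul_eq_mul, HahnSeries.coeff_one]
  split_ifs with h
  · subst h
    rw [show ((0 : Exps N) i : ℤ) = 0 from rfl, Int.cast_zero, map_zero, add_zero]
  · simp

lemma CMS.ham_one : S.ham (mulW F) dW (1 : WW N) =
    ∑ l, ((MvPolynomial.C (S.c l) * MvPolynomial.X l * MvPolynomial.X l) • (1 : WW N)
      - (MvPolynomial.X l : MvPolynomial (Fin N) ℂ) • embW F (S.B l)) := by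
  rw [CMS.ham, OpW.sum_apply]
  refine Finset.sum_congr rfl fun l _ => ?_
  rw [OpW.sub_apply, OpW.mul_apply, OpW.mul_apply, OpW.mul_apply, mulW_apply, mulW_apply, dW_one,
    map_smul, dW_one, CMS.cF, embW_const, HahnSeries.C_mul_eq_smul, smul_smul, smul_smul,
    mul_smul_comm, mul_one]

lemma HasLim.embW_pos {f : F} (h : HasLim N f 0) : 0 < (embW F f : WW N).orderTop := by
  rw [HasLim, map_zero, sub_zero] at h
  exact lt_of_lt_of_le h (orderTop_le_mapH _ _)

include hS in
/-- Injectivity of the constant term on the centralizer of `L_2`: an operator in the centralizer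
whose constant term vanishes is zero. -/
lemma CMS.vanish {A : OpW N} (hE : A ∈ equivar N) (hD : A ∈ diffOps N F) (h0 : HasSymbol A 0)
    (hA : S.ham (mulW F) dW * A = A * S.ham (mulW F) dW) (f : F) : A (embW F f) = 0 := by
  obtain ⟨n, hn⟩ := hD
  have hb := order_bound n A hn _ (equivar_bound hE)
  by_cases ha : A 1 = 0
  · have := hb f
    rw [ha, HahnSeries.orderTop_zero, WithTop.top_add, top_le_iff] at this
    exact HahnSeries.orderTop_eq_top.mp this
  exfalso
  obtain ⟨ν, hν⟩ := WithTop.ne_top_iff_exists.mp (mt HahnSeries.orderTop_eq_top.mp ha)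
  have hν1 : (A 1).coeff ν ≠ 0 := HahnSeries.coeff_orderTop_ne hν.symm
  have hν0 : ∀ μ < ν, (A 1).coeff μ = 0 := (le_orderTop_iff ν _).mp hν.le
  choose b hbl using S.B_lim hS
  have hc : ∀ l, S.c l ≠ 0 := fun l h => S.hk (by rw [← S.hcg l, h, zero_mul])
  have hsym : HasSymbol (S.ham (mulW F) dW) (∑ l, (MvPolynomial.C (S.c l) * MvPolynomial.X l
      * MvPolynomial.X l - MvPolynomial.C (b l) * MvPolynomial.X l)) :=
    HasSymbol.sum _ fun l => ((((HasLim.const _).symbol).mul (hasSymbol_d l)).mul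
      (hasSymbol_d l)).sub ((hbl l).symbol.mul (hasSymbol_d l))
  have e1 := (hsym ν (A 1) hν0).2
  -- the leading coefficient of `A b` for a function `b` is the limit of `b` times that of `A 1`
  have e2 : ∀ l, (A (embW F (S.B l))).coeff ν = MvPolynomial.C (b l) * (A 1).coeff ν := by
    intro l
    have h1 : HasLim N (S.B l - algebraMap ℂ F (b l)) 0 := by
      have := (hbl l).sub (HasLim.const (N := N) (F := F) (b l))
      rwa [sub_self] at this
    have h2 : embW F (S.B l) = MvPolynomial.C (σ := Fin N) (b l) • (1 : WW N)
        + embW F (S.B l - algebraMap ℂ F (b l)) := by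
      rw [map_sub, embW_const, ← HahnSeries.C_mul_eq_smul, mul_one, add_sub_cancel]
    have h3 := lt_of_lt_of_le (lt_add_top h1.embW_pos hν.le)
      (le_of_eq_of_le (add_comm _ _) (hb (S.B l - algebraMap ℂ F (b l))))
    rw [h2, map_add, map_smul, HahnSeries.coeff_add, HahnSeries.coeff_smul, smul_eq_mul,
      HahnSeries.coeff_eq_zero_of_lt_orderTop h3, add_zero]
  rw [← OpW.mul_apply, hA, OpW.mul_apply, S.ham_one, map_sum, HahnSeries.coeff_sum] at e1
  simp only [map_sub, map_smul, HahnSeries.coeff_sub, HahnSeries.coeff_smul, e2, smul_eq_mul] at e1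
  have e3 : ν = 0 := by
    refine quad_shift S.c b hc ν (mul_right_cancel₀ hν1 ?_)
    rw [← e1, Finset.sum_mul]
    exact Finset.sum_congr rfl fun l _ => by ring
  have e4 := (h0 0 1 (fun μ hμ => by rw [HahnSeries.coeff_one, if_neg hμ.ne])).2
  rw [map_zero, zero_mul] at e4
  exact hν1 (e3 ▸ e4)

/-! ### Specialization at `λ = 0` -/

/-- Specialization at `λ = 0`. -/
def ev0 : WW N →+* HahnSeries (Exps N) ℂ := mapH MvPolynomial.constantCoeff

variable (F) in
/-- The pairs of an operator on `WW N` and an operator on rational functions, the first of which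
specializes to the second at `λ = 0`. -/
def bridge : Subring (OpW N × Module.End ℂ F) where
  carrier := {P | ∀ w f, ev0 w = embH F f → ev0 (P.1 w) = embH F (P.2 f)}
  mul_mem' {P P'} h h' w f e := h _ _ (h' _ _ e)
  one_mem' w f e := e
  add_mem' {P P'} h h' w f e := by
    change ev0 (P.1 w + P'.1 w) = embH F (P.2 f + P'.2 f)
    rw [map_add, map_add, h _ _ e, h' _ _ e]
  zero_mem' w f e := by
    change ev0 0 = embH F 0
    rw [map_zero, map_zero]
  neg_mem' {P} h w f e := by
    change ev0 (-P.1 w) = embH F (-P.2 f)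
    rw [map_neg, map_neg, h _ _ e]

lemma ev0_embW (f : F) : ev0 (embW F f) = (embH F f : HahnSeries (Exps N) ℂ) := by
  ext γ
  rw [ev0, mapH_coeff, embW_coeff, MvPolynomial.constantCoeff_C]

variable (F) in
/-- Rational functions as multiplication operators on themselves. -/
def mulF : F →+* Module.End ℂ F := (Algebra.lmul ℂ F).toRingHom

lemma bridge_mul (f : F) : (mulW F f, mulF F f) ∈ bridge (N := N) F := by
  intro w g e
  change ev0 (embW F f * w) = embH F (f * g)
  rw [map_mul, map_mul, e, ev0_embW]

include hS in
lemma CMS.bridge_d (i : Fin N) : (dW i, (S.δ i : F →ₗ[ℂ] F)) ∈ bridge (N := N) F := by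
  intro w g e
  change ev0 (dW i w) = embH F (S.δ i g)
  ext γ
  rw [S.embH_der hS, ← e, ev0, mapH_coeff, mapH_coeff, dW_coeff, map_mul, map_add,
    MvPolynomial.constantCoeff_X, MvPolynomial.constantCoeff_C, zero_add]

include hS in
/-- The operators `L_p` on `WW N` specialize to those on rational functions. -/
lemma CMS.bridge_Lop (p : ℕ) :
    (S.Lop (mulW F) dW p, S.Lop (mulF F) (fun i => (S.δ i : F →ₗ[ℂ] F)) p)
      ∈ bridge (N := N) F := by
  have h := S.Lop_mem (φ := (mulW F).prod (mulF F)) (d := fun i => (dW i, (S.δ i : F →ₗ[ℂ] F)))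
    (bridge (N := N) F) (fun _ => bridge_mul _) (fun _ _ => bridge_mul _) (S.bridge_d hS) p
  have e1 := S.map_Lop (φ := (mulW F).prod (mulF F))
    (d := fun i => (dW (N := N) i, (S.δ i : F →ₗ[ℂ] F))) (RingHom.fst _ _) p
  have e2 := S.map_Lop (φ := (mulW F).prod (mulF F))
    (d := fun i => (dW (N := N) i, (S.δ i : F →ₗ[ℂ] F))) (RingHom.snd _ _) p
  convert h using 1
  exact Prod.ext e1.symm e2.symm

include hS in
/-- Commutativity of the deformed CMS integrals, for abstract data. -/
theorem CMS.Lop_comm (p q : ℕ) :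
    S.Lop (mulF F) (fun i => (S.δ i : F →ₗ[ℂ] F)) p
      * S.Lop (mulF F) (fun i => (S.δ i : F →ₗ[ℂ] F)) q
    - S.Lop (mulF F) (fun i => (S.δ i : F →ₗ[ℂ] F)) q
      * S.Lop (mulF F) (fun i => (S.δ i : F →ₗ[ℂ] F)) p = 0 := by
  set Lp := S.Lop (mulW F) (dW (N := N)) p with hLp
  set Lq := S.Lop (mulW F) (dW (N := N)) q with hLq
  obtain ⟨h, hp⟩ := S.Lop_symbolic hS p
  obtain ⟨h', hq⟩ := S.Lop_symbolic hS q
  have cp : Commute (S.ham (mulW F) dW) Lp := S.ham_Lop (S.rep hS) p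
  have cq : Commute (S.ham (mulW F) dW) Lq := S.ham_Lop (S.rep hS) q
  have h0 : HasSymbol (Lp * Lq - Lq * Lp) 0 := by
    have := (hp.mul hq).sub (hq.mul hp)
    rwa [mul_comm h', sub_self] at this
  have hv := S.vanish hS (A := Lp * Lq - Lq * Lp)
    (sub_mem (mul_mem (S.Lop_equivar p) (S.Lop_equivar q))
      (mul_mem (S.Lop_equivar q) (S.Lop_equivar p)))
    (sub_mem (mul_mem (S.Lop_diffOps hS p) (S.Lop_diffOps hS q))
      (mul_mem (S.Lop_diffOps hS q) (S.Lop_diffOps hS p))) h0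
    ((cp.mul_right cq).sub_right (cq.mul_right cp))
  have hbr := sub_mem (mul_mem (S.bridge_Lop hS p) (S.bridge_Lop hS q))
    (mul_mem (S.bridge_Lop hS q) (S.bridge_Lop hS p))
  refine LinearMap.ext fun f => ?_
  have e := hbr (embW F f) f (ev0_embW f)
  change ev0 ((Lp * Lq - Lq * Lp) (embW F f)) = _ at e
  rw [hv f, map_zero] at e
  exact (map_eq_zero _).mp e.symm

end Vanish

/-! ### The operators of the statement -/

section Link

instance (N : ℕ) : IsScalarTower ℂ (MvPolynomial (Fin N) ℂ) (Fld N) :=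
  inferInstanceAs (IsScalarTower ℂ (MvPolynomial (Fin N) ℂ)
    (FractionRing (MvPolynomial (Fin N) ℂ)))
instance (N : ℕ) : IsFractionRing (MvPolynomial (Fin N) ℂ) (Fld N) :=
  inferInstanceAs (IsFractionRing (MvPolynomial (Fin N) ℂ)
    (FractionRing (MvPolynomial (Fin N) ℂ)))

variable {N : ℕ} (n : ℕ) (k : ℂ) (hk : k ≠ 0) (Deul : Fin N → EndF N)

lemma xv_injective : Function.Injective (xv (N := N)) := fun _ _ h =>
  MvPolynomial.X_injective (IsFractionRing.injective (MvPolynomial (Fin N) ℂ) (Fld N) h)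

lemma par_cases (i : Fin N) : par n i = 0 ∨ par n i = 1 := by
  unfold par
  split_ifs <;> simp

variable {Deul} in
/-- The deformed CMS system of the given Euler derivations. -/
def cms (hD : IsEulerFamily Deul) : CMS (Fin N) (Fld N) where
  x := xv
  hx := xv_injective
  δ i := Derivation.mk' (Deul i) fun f g => by
    rw [hD.1, smul_eq_mul, smul_eq_mul, mul_comm g]
  hδ i j := hD.2 i j
  c i := k ^ par n i
  g i := k ^ (1 - par n i)
  k := k
  hk := hk
  hcg i := by rcases par_cases n i with h | h <;> simp [h]
  hsum i j := by
    rcases par_cases n i with h | h <;> rcases par_cases n j with h' | h' <;>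
      simp [h, h', add_comm]

variable {Deul} (hD : IsEulerFamily Deul)

lemma mulF_const (z : ℂ) (A : EndF N) : mulF (Fld N) (algebraMap ℂ (Fld N) z) * A = z • A := by
  refine LinearMap.ext fun f => ?_
  change algebraMap ℂ (Fld N) z * A f = z • A f
  rw [Algebra.smul_def]

/-- The terms `j = i` of the sums in `CMS.vec` vanish because `r_ii = 0`. -/
lemma Dpow_eq_vec (p : ℕ) (i : Fin N) :
    Dpow n k Deul (p + 1) i = (cms n k hk hD).vec (mulF (Fld N)) Deul (p + 1) i := by
  induction p generalizing i with
  | zero =>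
    simp only [Dpow, CMS.vec, sub_self, mul_zero, Finset.sum_const_zero, sub_zero, mul_one]
    exact (mulF_const _ _).symm
  | succ p ih =>
    rw [Dpow, CMS.vec]
    simp only [← ih]
    congr 1
    · rw [CMS.cF, mulF_const]
      rfl
    · rw [← Finset.sum_erase_add _ _ (Finset.mem_univ i), CMS.r_self, mul_zero, map_zero, zero_mul,
        add_zero]
      refine Finset.sum_congr rfl fun j _ => ?_
      rw [map_mul, mul_assoc, CMS.gF, mulF_const]
      rfl

lemma Ltot_eq_Lop (p : ℕ) :
    Ltot n k Deul (p + 1) = (cms n k hk hD).Lop (mulF (Fld N)) Deul (p + 1) := by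
  refine Finset.sum_congr rfl fun i _ => ?_
  rw [Dpow_eq_vec n k hk hD, CMS.cF, ← map_inv₀, mulF_const, inv_pow]
  rfl

end Link

/-- The deformed CMS integrals pairwise commute: for all integers `p, q ≥ 1`,
`[L_p, L_q] = 0` as `ℂ`-linear operators on `F = ℂ(x₁,…,x_{n+m})`. -/
theorem deformed_CMS_integrals_commute
    (n m : ℕ) (hn : 1 ≤ n) (hm : 1 ≤ m) (k : ℂ) (hk : k ≠ 0)
    (Deul : Fin (n + m) → EndF (n + m)) (hD : IsEulerFamily Deul)
    (p q : ℕ) (hp : 1 ≤ p) (hq : 1 ≤ q) :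
    Ltot n k Deul p ∘ₗ Ltot n k Deul q - Ltot n k Deul q ∘ₗ Ltot n k Deul p = 0 := by
  obtain ⟨p, rfl⟩ := Nat.exists_eq_succ_of_ne_zero (Nat.one_le_iff_ne_zero.mp hp)
  obtain ⟨q, rfl⟩ := Nat.exists_eq_succ_of_ne_zero (Nat.one_le_iff_ne_zero.mp hq)
  have h := (cms n k hk hD).Lop_comm (fun _ => rfl) (p + 1) (q + 1)
  rw [Nat.succ_eq_add_one, Nat.succ_eq_add_one, Ltot_eq_Lop n k hk hD, Ltot_eq_Lop n k hk hD]
  exact h
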